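/- Let G be a finite group. Every 2-maximal subgroup of G is 𝔘-subnormal in G if and only if G is either supersoluble or an SDH-group. -/

import Mathlib

open Subgroup

/-- A finite group is supersoluble if it has a normal series, all of whose terms are
normal in the whole group, with cyclic factors. -/
def IsSupersoluble (G : Type*) [Group G] : Prop :=
  ∃ (n : ℕ) (c : Fin (n + 1) → Subgroup G) (hc : ∀ i, (c i).Normal),
    c 0 = ⊥ ∧ c (Fin.last n) = ⊤ ∧
    ∀ i : Fin n, c i.castSucc ≤ c i.succ ∧
      haveI := (hc i.castSucc).subgroupOf (c i.succ)
      IsCyclic (↥(c i.succ) ⧸ ((c i.castSucc).subgroupOf (c i.succ)))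

/-- `H` is a maximal subgroup of `K`, where `H ≤ K` are subgroups of a common group. -/
def IsMaximalIn {G : Type*} [Group G] (H K : Subgroup G) : Prop :=
  H ≤ K ∧ IsCoatom (H.subgroupOf K)

/-- The `n`-maximal subgroups of `G`: `0`-maximal is `G` itself, and an `(n+1)`-maximal
subgroup is a maximal subgroup of some `n`-maximal subgroup. -/
def IsNMaximal {G : Type*} [Group G] : ℕ → Subgroup G → Prop
  | 0, H => H = ⊤
  | n + 1, H => ∃ K : Subgroup G, IsNMaximal n K ∧ IsMaximalIn H K

/-- `H` is `K`-`𝔘`-subnormal in `K`: there is a chain of subgroups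
`H = H₀ ≤ H₁ ≤ ⋯ ≤ Hₜ = K` such that at each step either `H_{i-1}` is normal in `H_i`
or `H_i` modulo the core of `H_{i-1}` in `H_i` is supersoluble. -/
def IsKUSubnormalIn {G : Type*} [Group G] (H K : Subgroup G) : Prop :=
  ∃ (n : ℕ) (c : Fin (n + 1) → Subgroup G),
    c 0 = H ∧ c (Fin.last n) = K ∧
    ∀ i : Fin n, c i.castSucc ≤ c i.succ ∧
      (((c i.castSucc).subgroupOf (c i.succ)).Normal ∨
        IsSupersoluble (↥(c i.succ) ⧸ ((c i.castSucc).subgroupOf (c i.succ)).normalCore))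

/-- `H` is `K`-`𝔘`-subnormal in `G`. -/
def IsKUSubnormal {G : Type*} [Group G] (H : Subgroup G) : Prop :=
  IsKUSubnormalIn H ⊤

/-- `H` is `𝔘`-subnormal in `G`: there is a chain of subgroups
`H = H₀ ≤ H₁ ≤ ⋯ ≤ Hₙ = G` with `H_i` modulo the core of `H_{i-1}` in `H_i`
supersoluble at each step. -/
def IsUSubnormal {G : Type*} [Group G] (H : Subgroup G) : Prop :=
  ∃ (n : ℕ) (c : Fin (n + 1) → Subgroup G),
    c 0 = H ∧ c (Fin.last n) = ⊤ ∧
    ∀ i : Fin n, c i.castSucc ≤ c i.succ ∧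
      IsSupersoluble (↥(c i.succ) ⧸ ((c i.castSucc).subgroupOf (c i.succ)).normalCore)

/-- The supersoluble residual `G^𝔘` of `G`: the intersection of all normal subgroups `N`
of `G` with `G/N` supersoluble. -/
def ssResidual (G : Type*) [Group G] : Subgroup G :=
  ⨅ N ∈ {N : Subgroup G | ∃ hN : N.Normal, haveI := hN; IsSupersoluble (G ⧸ N)}, N

/-- `N` is a minimal normal subgroup of `G`. -/
def IsMinimalNormal {G : Type*} [Group G] (N : Subgroup G) : Prop :=
  N.Normal ∧ N ≠ ⊥ ∧ ∀ M : Subgroup G, M.Normal → M ≤ N → M ≠ ⊥ → M = N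

/-- `G` is minimal nonsupersoluble: not supersoluble, but all proper subgroups are. -/
def IsMinimalNonsupersoluble (G : Type*) [Group G] : Prop :=
  ¬ IsSupersoluble G ∧ ∀ H : Subgroup G, H ≠ ⊤ → IsSupersoluble H

/-- `G` is an `SDH`-group: minimal nonsupersoluble with `G^𝔘` a minimal normal subgroup. -/
def IsSDH (G : Type*) [Group G] : Prop :=
  IsMinimalNonsupersoluble G ∧ IsMinimalNormal (ssResidual G)

/-- `H` is a Sylow `p`-subgroup of its ambient (finite) group. -/
def IsSylowSubgroup {G : Type*} [Group G] (p : ℕ) (H : Subgroup G) : Prop :=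
  IsPGroup p H ∧ ¬ p ∣ H.index

/-- A finite group is Ore dispersive if, enumerating the prime divisors of `|G|`
in decreasing order as `p₁ > p₂ > ⋯ > pₙ`, for every `i` it has a normal subgroup of
order `p₁^{a₁} ⋯ p_i^{a_i}`. -/
def OreDispersive (G : Type*) [Group G] : Prop :=
  ∀ p : ℕ, p.Prime → ∃ N : Subgroup G, N.Normal ∧
    Nat.card N =
      ∏ q ∈ (Nat.card G).primeFactors.filter (fun q => p ≤ q),
        q ^ (Nat.card G).factorization q

/-- `A/B` is a chief factor of `G`. -/
def IsChiefFactor {G : Type*} [Group G] (A B : Subgroup G) : Prop :=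
  A.Normal ∧ B ≤ A ∧ ∃ hB : B.Normal,
    haveI := hB
    IsMinimalNormal (A.map (QuotientGroup.mk' B))

/-- The subgroups `H` and `K` of `G` are conjugate in `G`. -/
def ConjSubgroup {G : Type*} [Group G] (H K : Subgroup G) : Prop :=
  ∃ g : G, K = H.map (MulAut.conj g).toMonoidHom

/-- The Frattini subgroup of a subgroup `H` of `G`, as a subgroup of `G`. -/
def frattiniIn {G : Type*} [Group G] (H : Subgroup G) : Subgroup G :=
  (frattini H).map H.subtype

/-- `G = P ⋊ (Q ⋊ R)` as an internal statement about subgroups `P`, `Q`, `R` of `G`. -/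
def IsInternalSemidirect3 {G : Type*} [Group G] (P Q R : Subgroup G) : Prop :=
  P.Normal ∧ P ⊓ (Q ⊔ R) = ⊥ ∧ P ⊔ Q ⊔ R = ⊤ ∧
    (Q.subgroupOf (Q ⊔ R)).Normal ∧ Q ⊓ R = ⊥

/-- `G = P ⋊ (Q ⋊ (R ⋊ T))` as an internal statement about subgroups of `G`. -/
def IsInternalSemidirect4 {G : Type*} [Group G] (P Q R T : Subgroup G) : Prop :=
  P.Normal ∧ P ⊓ (Q ⊔ R ⊔ T) = ⊥ ∧ P ⊔ Q ⊔ R ⊔ T = ⊤ ∧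
    (Q.subgroupOf (Q ⊔ R ⊔ T)).Normal ∧ Q ⊓ (R ⊔ T) = ⊥ ∧
    (R.subgroupOf (R ⊔ T)).Normal ∧ R ⊓ T = ⊥

/-!
Let `D` be the supersoluble residual of `G`. If `G` is an `SDH`-group and `M` is a maximal subgroup,
then either `D ≤ M`, or `M` complements the abelian group `D`; in both cases a maximal subgroup `H`
of `M` lies in a proper, hence supersoluble, subgroup containing `D`, and is therefore
`𝔘`-subnormal.

Conversely, assume that every `2`-maximal subgroup is `𝔘`-subnormal and that `G` is not
supersoluble. Each maximal subgroup `M` of `G` is supersoluble modulo the core of any of its maximal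
subgroups, hence modulo its Frattini subgroup, and therefore supersoluble. So `G` is minimal
nonsupersoluble, and `G` is solvable by the focal subgroup theorem and Burnside's transfer theorem.
The top of a chain witnessing `𝔘`-subnormality shows that a proper subgroup `L` of a maximal
subgroup never satisfies `L D = G`. Let `D / E` be a chief factor of `G`, of exponent `p`, and let
`M` be a maximal subgroup containing `E` but not `D`. Then `C_M(D / E)` lies in the Frattini
subgroup of `M`, while `p` does not divide the index of `C_G(D / E)`; so the order of `M`, and with
it that of `E`, is prime to `p`. As `E` lies in the Frattini subgroup of `G`, a Sylow `p`-subgroup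
`S` of `D` is normal in `G`, and `G = M S` gives `D ≤ S`, whence `E = 1`. So `D` is a minimal normal
subgroup.
-/

section CyclicSeries

variable {G H : Type*} [Group G] [Group H]

/-- `B` is cyclic modulo `A`, phrased elementwise so that it can be transported along
homomorphisms without forming quotients. -/
def IsCyclicModulo (A B : Subgroup G) : Prop :=
  ∃ b ∈ B, ∀ x ∈ B, ∃ k : ℤ, x * (b ^ k)⁻¹ ∈ A

theorem isCyclic_iff_isCyclicModulo {A B : Subgroup G} (f : B →* H)
    (hf : Function.Surjective f) (hker : f.ker = A.subgroupOf B) :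
    IsCyclic H ↔ IsCyclicModulo A B := by
  have eq_zpow_iff (b x : B) (k : ℤ) : f b ^ k = f x ↔ (x : G) * ((b : G) ^ k)⁻¹ ∈ A := by
    rw [← map_zpow, eq_comm, ← mul_inv_eq_one, ← map_inv, ← map_mul, ← MonoidHom.mem_ker, hker,
      mem_subgroupOf, coe_mul, coe_inv, coe_zpow]
  constructor
  · rintro ⟨c, hc⟩
    obtain ⟨b, rfl⟩ := hf c
    refine ⟨b, b.2, fun x hx => ?_⟩
    obtain ⟨k, hk⟩ := hc (f ⟨x, hx⟩)
    exact ⟨k, (eq_zpow_iff b ⟨x, hx⟩ k).1 hk⟩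
  · rintro ⟨b, hb, h⟩
    refine ⟨f ⟨b, hb⟩, fun c => ?_⟩
    obtain ⟨x, rfl⟩ := hf c
    obtain ⟨k, hk⟩ := h x x.2
    exact ⟨k, (eq_zpow_iff ⟨b, hb⟩ x k).2 hk⟩

theorem isCyclic_quotient_subgroupOf_iff {A B : Subgroup G} [(A.subgroupOf B).Normal] :
    IsCyclic (B ⧸ A.subgroupOf B) ↔ IsCyclicModulo A B :=
  isCyclic_iff_isCyclicModulo (QuotientGroup.mk' _) (QuotientGroup.mk'_surjective _)
    (QuotientGroup.ker_mk' _)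

theorem isCyclicModulo_bot {B : Subgroup G} : IsCyclicModulo ⊥ B ↔ IsCyclic B :=
  (isCyclic_iff_isCyclicModulo (MonoidHom.id B) Function.surjective_id (by simp)).symm

theorem IsCyclicModulo.anti_right {A B B' : Subgroup G} [A.Normal] (h : IsCyclicModulo A B)
    (hB : B' ≤ B) : IsCyclicModulo A B' := by
  have := isCyclic_quotient_subgroupOf_iff.2 h
  let f := (QuotientGroup.mk' (A.subgroupOf B)).comp (inclusion hB)
  refine (isCyclic_iff_isCyclicModulo f.rangeRestrict f.rangeRestrict_surjective ?_).1 inferInstance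
  rw [MonoidHom.ker_rangeRestrict, ← MonoidHom.comap_ker, QuotientGroup.ker_mk']
  rfl

theorem IsCyclicModulo.comap {A B : Subgroup G} [A.Normal] (h : IsCyclicModulo A B)
    (f : H →* G) : IsCyclicModulo (A.comap f) (B.comap f) := by
  obtain ⟨_, ⟨b, hb, rfl⟩, hgen⟩ := h.anti_right (map_comap_le f B)
  refine ⟨b, hb, fun x hx => ?_⟩
  obtain ⟨k, hk⟩ := hgen (f x) (mem_map_of_mem f hx)
  exact ⟨k, by simpa [mem_comap] using hk⟩

theorem IsCyclicModulo.map {A B : Subgroup G} (h : IsCyclicModulo A B) (f : G →* H) :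
    IsCyclicModulo (A.map f) (B.map f) := by
  obtain ⟨b, hb, hgen⟩ := h
  refine ⟨f b, mem_map_of_mem f hb, ?_⟩
  rintro _ ⟨x, hx, rfl⟩
  obtain ⟨k, hk⟩ := hgen x hx
  exact ⟨k, _, hk, by simp⟩

theorem IsCyclicModulo.inf {A B : Subgroup G} [A.Normal] (h : IsCyclicModulo A B)
    (C : Subgroup G) : IsCyclicModulo (A ⊓ C) (B ⊓ C) := by
  obtain ⟨b, hb, hgen⟩ := h.anti_right (inf_le_left : B ⊓ C ≤ B)
  refine ⟨b, hb, fun x hx => ?_⟩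
  obtain ⟨k, hk⟩ := hgen x hx
  exact ⟨k, hk, C.mul_mem hx.2 (C.inv_mem (C.zpow_mem hb.2 k))⟩

/-- One step of a normal series with cyclic factors. -/
def CyclicStep (A B : Subgroup G) : Prop :=
  A.Normal ∧ B.Normal ∧ A ≤ B ∧ IsCyclicModulo A B

theorem CyclicStep.comap {A B : Subgroup G} (h : CyclicStep A B) (f : H →* G) :
    CyclicStep (A.comap f) (B.comap f) := by
  obtain ⟨_, _, hAB, hcyc⟩ := h
  exact ⟨inferInstance, inferInstance, comap_mono hAB, hcyc.comap f⟩

theorem CyclicStep.map {A B : Subgroup G} (h : CyclicStep A B) {f : G →* H}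
    (hf : Function.Surjective f) : CyclicStep (A.map f) (B.map f) := by
  obtain ⟨hA, hB, hAB, hcyc⟩ := h
  exact ⟨hA.map f hf, hB.map f hf, map_mono hAB, hcyc.map f⟩

theorem CyclicStep.inf {A B : Subgroup G} (h : CyclicStep A B) (C : Subgroup G) [C.Normal] :
    CyclicStep (A ⊓ C) (B ⊓ C) := by
  obtain ⟨_, _, hAB, hcyc⟩ := h
  exact ⟨inferInstance, inferInstance, inf_le_inf_right _ hAB, hcyc.inf C⟩

/-- `G` is supersoluble above `N`: there is a normal series with cyclic factors from `N` to `G`.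
For a normal subgroup `N` this says that `G ⧸ N` is supersoluble. -/
def IsSupersolubleAbove (N : Subgroup G) : Prop :=
  Relation.ReflTransGen CyclicStep N ⊤

theorem isSupersolubleAbove_top : IsSupersolubleAbove (⊤ : Subgroup G) :=
  Relation.ReflTransGen.refl

namespace IsSupersolubleAbove

theorem comap {N : Subgroup G} (h : IsSupersolubleAbove N) (f : H →* G) :
    IsSupersolubleAbove (N.comap f) := by
  have := Relation.ReflTransGen.lift (p := CyclicStep) (Subgroup.comap f)
    (fun A B (hAB : CyclicStep A B) => hAB.comap f) _ _ h
  rwa [Function.onFun, comap_top] at this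

theorem map {N : Subgroup G} (h : IsSupersolubleAbove N) {f : G →* H}
    (hf : Function.Surjective f) : IsSupersolubleAbove (N.map f) := by
  have := Relation.ReflTransGen.lift (p := CyclicStep) (Subgroup.map f)
    (fun A B (hAB : CyclicStep A B) => hAB.map hf) _ _ h
  rwa [Function.onFun, map_top_of_surjective f hf] at this

theorem inf {A B : Subgroup G} [B.Normal] (hA : IsSupersolubleAbove A)
    (hB : IsSupersolubleAbove B) : IsSupersolubleAbove (A ⊓ B) := by
  have := Relation.ReflTransGen.lift (p := CyclicStep) (· ⊓ B)
    (fun X Y (hXY : CyclicStep X Y) => hXY.inf B) _ _ hA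
  rw [Function.onFun, top_inf_eq] at this
  exact this.trans hB

theorem mono {A B : Subgroup G} [B.Normal] (hA : IsSupersolubleAbove A) (hAB : A ≤ B) :
    IsSupersolubleAbove B := by
  have := (hA.map (QuotientGroup.mk'_surjective B)).comap (QuotientGroup.mk' B)
  rwa [QuotientGroup.comap_map_mk', sup_eq_left.2 hAB] at this

end IsSupersolubleAbove

theorem reflTransGen_iff_exists_fin {α : Type*} {r : α → α → Prop} {a b : α} :
    Relation.ReflTransGen r a b ↔
      ∃ (n : ℕ) (c : Fin (n + 1) → α), c 0 = a ∧ c (Fin.last n) = b ∧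
        ∀ i : Fin n, r (c i.castSucc) (c i.succ) := by
  constructor
  · intro h
    induction h using Relation.ReflTransGen.head_induction_on with
    | refl => exact ⟨0, fun _ => b, rfl, rfl, fun i => i.elim0⟩
    | @head a _ hac _ ih =>
      obtain ⟨n, c, rfl, hlast, hc⟩ := ih
      refine ⟨n + 1, Fin.cons a c, rfl, by rwa [← Fin.succ_last, Fin.cons_succ], fun i => ?_⟩
      cases i using Fin.cases with
      | zero => exact hac
      | succ i => exact hc i
  · rintro ⟨n, c, rfl, rfl, hc⟩
    induction Fin.last n using Fin.induction with
    | zero => exact .refl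
    | succ i ih => exact ih.tail (hc i)

theorem isSupersoluble_iff : IsSupersoluble G ↔ IsSupersolubleAbove (⊥ : Subgroup G) := by
  rw [IsSupersolubleAbove, reflTransGen_iff_exists_fin]
  constructor
  · rintro ⟨n, c, hc, h0, hn, hstep⟩
    refine ⟨n, c, h0, hn, fun i => ⟨hc _, hc _, (hstep i).1, ?_⟩⟩
    have := (hc i.castSucc).subgroupOf (c i.succ)
    exact isCyclic_quotient_subgroupOf_iff.1 (hstep i).2
  · rintro ⟨n, c, h0, hn, hstep⟩
    have hc (i : Fin (n + 1)) : (c i).Normal := by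
      cases i using Fin.lastCases with
      | last => rw [hn]; infer_instance
      | cast i => exact (hstep i).1
    refine ⟨n, c, hc, h0, hn, fun i => ⟨(hstep i).2.2.1, ?_⟩⟩
    have := (hc i.castSucc).subgroupOf (c i.succ)
    exact isCyclic_quotient_subgroupOf_iff.2 (hstep i).2.2.2

theorem isSupersoluble_quotient_iff {N : Subgroup G} [N.Normal] :
    IsSupersoluble (G ⧸ N) ↔ IsSupersolubleAbove N := by
  rw [isSupersoluble_iff]
  constructor
  · intro h
    have := h.comap (QuotientGroup.mk' N)
    rwa [MonoidHom.comap_bot, QuotientGroup.ker_mk'] at this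
  · intro h
    have := h.map (QuotientGroup.mk'_surjective N)
    rwa [QuotientGroup.map_mk'_self] at this

namespace IsSupersoluble

theorem of_injective (h : IsSupersoluble G) {f : H →* G} (hf : Function.Injective f) :
    IsSupersoluble H := by
  rw [isSupersoluble_iff] at h ⊢
  have := h.comap f
  rwa [MonoidHom.comap_bot, (MonoidHom.ker_eq_bot_iff f).2 hf] at this

theorem of_surjective (h : IsSupersoluble G) {f : G →* H} (hf : Function.Surjective f) :
    IsSupersoluble H := by
  rw [isSupersoluble_iff] at h ⊢
  have := h.map hf
  rwa [Subgroup.map_bot] at this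

theorem above (h : IsSupersoluble G) (N : Subgroup G) [N.Normal] : IsSupersolubleAbove N :=
  (isSupersoluble_iff.1 h).mono bot_le

end IsSupersoluble

theorem IsSupersolubleAbove.isSupersoluble_of_isCyclic {N : Subgroup G} [N.Normal] [IsCyclic N]
    (h : IsSupersolubleAbove N) : IsSupersoluble G :=
  isSupersoluble_iff.2 <| h.head
    ⟨inferInstance, inferInstance, bot_le, isCyclicModulo_bot.2 inferInstance⟩

end CyclicSeries

section SupersolubleFinite

variable {G H : Type*} [Group G] [Group H]

theorem characteristic_of_isCyclic [IsCyclic G] (K : Subgroup G) : K.Characteristic := by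
  refine characteristic_iff_map_le.2 fun φ => ?_
  obtain ⟨m, hm⟩ := MonoidHom.map_cyclic φ.toMonoidHom
  rintro _ ⟨x, hx, rfl⟩
  exact hm x ▸ K.zpow_mem hx m

namespace IsSupersoluble

theorem exists_isCyclic_normal_le (h : IsSupersoluble G) {K : Subgroup G} [K.Normal]
    (hK : K ≠ ⊥) : ∃ C : Subgroup G, C.Normal ∧ C ≠ ⊥ ∧ C ≤ K ∧ IsCyclic C := by
  suffices ∀ B : Subgroup G, Relation.ReflTransGen CyclicStep ⊥ B → B ⊓ K ≠ ⊥ →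
      ∃ C : Subgroup G, C.Normal ∧ C ≠ ⊥ ∧ C ≤ K ∧ IsCyclic C from
    this ⊤ (isSupersoluble_iff.1 h) (by rwa [top_inf_eq])
  intro B hB
  induction hB with
  | refl => simp
  | @tail A B _ hAB ih =>
    intro hBK
    by_cases hAK : A ⊓ K = ⊥
    · obtain ⟨-, hnormal, -, hcyc⟩ := hAB.inf K
      exact ⟨B ⊓ K, hnormal, hBK, inf_le_right, isCyclicModulo_bot.1 (hAK ▸ hcyc)⟩
    · exact ih hAK

theorem exists_prime_card_normal_le [Finite G] (h : IsSupersoluble G) {K : Subgroup G}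
    [K.Normal] (hK : K ≠ ⊥) :
    ∃ Q : Subgroup G, Q.Normal ∧ (Nat.card Q).Prime ∧ Q ≤ K := by
  obtain ⟨C, _, hC, hCK, _⟩ := h.exists_isCyclic_normal_le hK
  obtain ⟨q, hq, hqC⟩ := Nat.exists_prime_and_dvd (mt card_eq_one.1 hC)
  have := Fact.mk hq
  obtain ⟨x, hx⟩ := exists_prime_orderOf_dvd_card' q hqC
  have := characteristic_of_isCyclic (zpowers x)
  refine ⟨(zpowers x).map C.subtype, inferInstance, ?_, (map_subtype_le _).trans hCK⟩
  rwa [card_map_of_injective C.subtype_injective, Nat.card_zpowers, hx]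

theorem isSolvable (h : IsSupersoluble G) : Group.IsSolvable G := by
  suffices ∀ B : Subgroup G, Relation.ReflTransGen CyclicStep ⊥ B → Group.IsSolvable B from
    have := this ⊤ (isSupersoluble_iff.1 h)
    Group.isSolvable_of_surjective (f := (topEquiv (G := G)).toMonoidHom) topEquiv.surjective
  intro B hB
  induction hB with
  | refl => infer_instance
  | @tail A B _ hAB ih =>
    obtain ⟨hA, -, hle, hcyc⟩ := hAB
    have := hA.subgroupOf B
    have := isCyclic_quotient_subgroupOf_iff.2 hcyc
    let _ : CommGroup (B ⧸ A.subgroupOf B) := IsCyclic.commGroup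
    have : Group.IsSolvable (A.subgroupOf B) :=
      Group.isSolvable_of_isSolvable_injective (f := (subgroupOfEquivOfLe hle).toMonoidHom)
        (subgroupOfEquivOfLe hle).injective
    exact (Group.isSolvable_iff_subgroup_quotient (A.subgroupOf B)).2 ⟨this, inferInstance⟩

end IsSupersoluble

end SupersolubleFinite

theorem ker_conjNormal {G : Type*} [Group G] (N : Subgroup G) [N.Normal] :
    (MulAut.conjNormal (H := N)).ker = centralizer (N : Set G) := by
  ext g
  simp only [MonoidHom.mem_ker, MulEquiv.ext_iff, Subtype.ext_iff, Subtype.forall,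
    MulAut.conjNormal_apply, MulAut.one_apply, mem_centralizer_iff, mul_inv_eq_iff_eq_mul]
  exact forall₂_congr fun _ _ => eq_comm

section AbelianPowResidual

/-- The smallest subgroup `W` of `G` such that `G ⧸ W` is abelian of exponent dividing `n`. For
`n = p - 1` it acts trivially on every normal subgroup of prime order `p`. -/
def abelianPowResidual (n : ℕ) (G : Type*) [Group G] : Subgroup G :=
  commutator G ⊔ closure (Set.range (· ^ n))

variable {G H : Type*} [Group G] [Group H] {n : ℕ}

theorem pow_mem_abelianPowResidual (x : G) : x ^ n ∈ abelianPowResidual n G :=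
  le_sup_right (a := commutator G) (subset_closure (Set.mem_range_self x))

theorem map_abelianPowResidual {f : G →* H} (hf : Function.Surjective f) :
    (abelianPowResidual n G).map f = abelianPowResidual n H := by
  have hrange : f '' Set.range (· ^ n) = Set.range (· ^ n) := by
    ext y
    simp only [← Set.range_comp, Set.mem_range, Function.comp_apply, map_pow, hf.exists]
  rw [abelianPowResidual, Subgroup.map_sup, commutator_def, map_commutator,
    map_top_of_surjective f hf, MonoidHom.map_closure, hrange, abelianPowResidual, commutator_def]

instance characteristic_abelianPowResidual : (abelianPowResidual n G).Characteristic :=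
  characteristic_iff_map_eq.2 fun φ => map_abelianPowResidual φ.surjective

theorem abelianPowResidual_le_ker {A : Type*} [CommGroup A] (f : G →* A)
    (h : ∀ a : A, a ^ n = 1) : abelianPowResidual n G ≤ f.ker := by
  refine sup_le (Abelianization.commutator_subset_ker f) ((closure_le _).2 ?_)
  rintro _ ⟨x, rfl⟩
  exact (map_pow f x n).trans (h (f x))

theorem abelianPowResidual_totient_le_centralizer (N : Subgroup G) [N.Normal] [IsCyclic N] :
    abelianPowResidual (Nat.card N).totient G ≤ centralizer N := by
  rw [← ker_conjNormal, ← MonoidHom.ker_mulEquiv_comp _ (IsCyclic.mulAutMulEquiv N)]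
  exact abelianPowResidual_le_ker _ ZMod.pow_totient

theorem abelianPowResidual_le_centralizer_of_prime {N : Subgroup G} [N.Normal] {p : ℕ}
    (hp : p.Prime) (hN : Nat.card N = p) : abelianPowResidual (p - 1) G ≤ centralizer N := by
  have := Fact.mk hp
  have := isCyclic_of_prime_card hN
  have := abelianPowResidual_totient_le_centralizer N
  rwa [hN, Nat.totient_prime hp] at this

theorem dvd_of_dvd_index_abelianPowResidual [Finite G] {q : ℕ} (hq : q.Prime)
    (h : q ∣ (abelianPowResidual n G).index) : q ∣ n := by
  have := Fact.mk hq
  obtain ⟨x, hx⟩ := exists_prime_orderOf_dvd_card' (G := G ⧸ abelianPowResidual n G) q h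
  obtain ⟨x, rfl⟩ := QuotientGroup.mk_surjective x
  rw [← hx]
  apply orderOf_dvd_of_pow_eq_one
  rw [← QuotientGroup.mk_pow, QuotientGroup.eq_one_iff]
  exact pow_mem_abelianPowResidual x

theorem abelianPowResidual_eq_top_of_coprime [Finite G] (h : (Nat.card G).Coprime n) :
    abelianPowResidual n G = ⊤ := by
  rw [← index_eq_one]
  by_contra hne
  obtain ⟨q, hq, hdvd⟩ := Nat.exists_prime_and_dvd hne
  exact Nat.not_coprime_of_dvd_of_dvd hq.one_lt (hdvd.trans (index_dvd_card _))
    (dvd_of_dvd_index_abelianPowResidual hq hdvd) h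

end AbelianPowResidual

section CoprimeSubgroups

variable {G H : Type*} [Group G] [Group H]

theorem card_comap_of_surjective {f : G →* H} (hf : Function.Surjective f) (K : Subgroup H) :
    Nat.card (K.comap f) = Nat.card f.ker * Nat.card K := by
  have := relIndex_mul_relIndex ⊥ f.ker (K.comap f) bot_le (f.ker_le_comap K)
  rwa [relIndex_bot_left, relIndex_bot_left, relIndex_ker, map_comap_eq_self_of_surjective hf,
    eq_comm] at this

theorem card_quotient_lt_of_ne_bot [Finite G] {N : Subgroup G} (hN : N ≠ ⊥) :
    Nat.card (G ⧸ N) < Nat.card G := by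
  rw [card_eq_card_quotient_mul_card_subgroup N]
  exact lt_mul_of_one_lt_right Nat.card_pos ((one_lt_card_iff_ne_bot N).2 hN)

theorem le_of_coprime_card_index {K L : Subgroup G} [K.Normal]
    (h : (Nat.card L).Coprime K.index) : L ≤ K :=
  relIndex_eq_one.1 <|
    Nat.eq_one_of_dvd_coprimes h (relIndex_dvd_card K L) (relIndex_dvd_index_of_normal K L)

theorem characteristic_of_coprime_card_index {K : Subgroup G} [K.Normal]
    (h : (Nat.card K).Coprime K.index) : K.Characteristic :=
  characteristic_iff_map_le.2 fun φ => le_of_coprime_card_index <| by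
    rwa [card_map_of_injective φ.injective]

end CoprimeSubgroups

section PNilpotent

/-- `G` is `p`-nilpotent: it has a normal `p`-complement, that is, a normal subgroup of order
prime to `p` and index a power of `p`. -/
def IsPNilpotent (p : ℕ) (G : Type*) [Group G] : Prop :=
  ∃ K : Subgroup G, K.Normal ∧ ¬ p ∣ Nat.card K ∧ ∃ k, K.index = p ^ k

variable {G H : Type*} [Group G] [Group H] {p : ℕ}

theorem isPNilpotent_of_normalizer_le_centralizer [Finite G] [Fact p.Prime] (P : Sylow p G)
    (hP : normalizer (P : Set G) ≤ centralizer (P : Set G)) : IsPNilpotent p G := by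
  refine ⟨(MonoidHom.transferSylow P hP).ker, inferInstance,
    MonoidHom.not_dvd_card_ker_transferSylow P hP, ?_⟩
  rw [(MonoidHom.ker_transferSylow_isComplement' P hP).symm.index_eq_card]
  exact IsPGroup.iff_card.1 P.isPGroup'

namespace IsPNilpotent

theorem exists_characteristic (hp : p.Prime) (h : IsPNilpotent p G) :
    ∃ K : Subgroup G, K.Characteristic ∧ ¬ p ∣ Nat.card K ∧ ∃ k, K.index = p ^ k := by
  obtain ⟨K, _, hpK, k, hk⟩ := h
  exact ⟨K, characteristic_of_coprime_card_index
    (hk ▸ ((hp.coprime_iff_not_dvd.2 hpK).pow_left k).symm), hpK, k, hk⟩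

theorem of_normal (hp : p.Prime) {S : Subgroup G} [S.Normal] (hS : ∃ k, S.index = p ^ k)
    (h : IsPNilpotent p S) : IsPNilpotent p G := by
  obtain ⟨K, _, hpK, k, hk⟩ := h.exists_characteristic hp
  obtain ⟨j, hj⟩ := hS
  refine ⟨K.map S.subtype, inferInstance, ?_, k + j, ?_⟩
  · rwa [card_map_of_injective S.subtype_injective]
  · rw [index_map_subtype, hk, hj, pow_add]

theorem of_surjective_of_not_dvd_card_ker (hp : p.Prime) (h : IsPNilpotent p H) {f : G →* H}
    (hf : Function.Surjective f) (hker : ¬ p ∣ Nat.card f.ker) : IsPNilpotent p G := by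
  obtain ⟨K, _, hpK, k, hk⟩ := h
  refine ⟨K.comap f, inferInstance, ?_, k, by rw [index_comap_of_surjective K hf, hk]⟩
  rw [card_comap_of_surjective hf]
  exact hp.not_dvd_mul hker hpK

theorem of_surjective_of_ker_le_center [Finite G] (hp : p.Prime) (h : IsPNilpotent p H)
    {f : G →* H} (hf : Function.Surjective f) (hker : IsPGroup p f.ker)
    (hcenter : f.ker ≤ center G) : IsPNilpotent p G := by
  have := Fact.mk hp
  obtain ⟨K, _, hpK, k, hk⟩ := h
  let S := K.comap f
  refine of_normal hp (S := S) ⟨k, by rw [index_comap_of_surjective K hf, hk]⟩ ?_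
  have hindex : ¬ p ∣ (f.ker.subgroupOf S).index := by
    rwa [← relIndex, relIndex_ker, map_comap_eq_self_of_surjective hf]
  let P : Sylow p S := (hker.comap_subtype (K := S)).toSylow hindex
  refine isPNilpotent_of_normalizer_le_centralizer P fun x _ z hz => Subtype.ext ?_
  exact ((mem_center_iff.1 (hcenter hz)) x).symm

/-- A normal `p`-complement meets a normal `p`-subgroup trivially, hence centralizes it. -/
theorem index_centralizer_eq_pow (hp : p.Prime) (h : IsPNilpotent p G) {D : Subgroup G}
    [D.Normal] (hD : IsPGroup p D) : ∃ k, (centralizer (D : Set G)).index = p ^ k := by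
  obtain ⟨K, hK, hpK, k, hk⟩ := h
  have hdisj : Disjoint K D :=
    IsPGroup.disjoint_of_coprime IsPGroup.card hD (hp.coprime_iff_not_dvd.2 hpK).symm
  have hle : K ≤ centralizer D := fun x hx d hd =>
    (commute_of_normal_of_disjoint K D hK inferInstance hdisj x d hx hd).symm.eq
  obtain ⟨j, -, hj⟩ := (Nat.dvd_prime_pow hp).1 (hk ▸ index_dvd_of_le hle)
  exact ⟨j, hj⟩

end IsPNilpotent

namespace IsSupersoluble

theorem isPNilpotent_abelianPowResidual [Finite G] (h : IsSupersoluble G) (hp : p.Prime) :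
    IsPNilpotent p (abelianPowResidual (p - 1) G) := by
  induction hn : Nat.card G using Nat.strong_induction_on generalizing G with
  | _ n ih =>
    subst hn
    by_cases hbot : (⊤ : Subgroup G) = ⊥
    · refine ⟨⊥, inferInstance, by simpa using hp.one_lt.ne', 0, ?_⟩
      rw [pow_zero, index_bot, card_eq_one, eq_bot_iff, ← hbot]
      exact le_top
    obtain ⟨N, _, hN, -⟩ := h.exists_prime_card_normal_le hbot
    have hsurj := QuotientGroup.mk'_surjective N
    have hquot := ih _ (card_quotient_lt_of_ne_bot ((one_lt_card_iff_ne_bot N).1 hN.one_lt))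
      (h.of_surjective hsurj) rfl
    rw [← map_abelianPowResidual hsurj] at hquot
    let f := (QuotientGroup.mk' N).subgroupMap (abelianPowResidual (p - 1) G)
    have hf : Function.Surjective f := MonoidHom.subgroupMap_surjective _ _
    have hker : f.ker = N.subgroupOf (abelianPowResidual (p - 1) G) := by
      rw [ker_subgroupMap, QuotientGroup.ker_mk']
    have hdvd : Nat.card f.ker ∣ Nat.card N :=
      hker ▸ card_comap_dvd_of_injective N _ (subtype_injective _)
    by_cases hpN : Nat.card N = p
    · refine hquot.of_surjective_of_ker_le_center hp hf ?_ ?_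
      · exact hker ▸ (hpN ▸ IsPGroup.card : IsPGroup p N).comap_subtype
      · rw [hker]
        intro x hx
        refine mem_center_iff.2 fun w => Subtype.ext ?_
        exact ((abelianPowResidual_le_centralizer_of_prime hp hpN) w.2 x hx).symm
    · refine hquot.of_surjective_of_not_dvd_card_ker hp hf fun hdvd' => hpN ?_
      exact ((Nat.prime_dvd_prime_iff_eq hp hN).1 (hdvd'.trans hdvd)).symm

theorem isPNilpotent_of_coprime [Finite G] (h : IsSupersoluble G) (hp : p.Prime)
    (hcop : (Nat.card G).Coprime (p - 1)) : IsPNilpotent p G :=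
  .of_normal hp ⟨0, by rw [abelianPowResidual_eq_top_of_coprime hcop, index_top, pow_zero]⟩
    (h.isPNilpotent_abelianPowResidual hp)

end IsSupersoluble

end PNilpotent

section Eigenvalue

variable {p : ℕ} [Fact p.Prime]

theorem exists_apply_eq_nsmul_of_pow_sub_one_eq_one {V : Type*} [AddCommGroup V]
    [Module (ZMod p) V] [Finite V] [Nontrivial V] {f : AddMonoid.End V} (hf : f ^ (p - 1) = 1) :
    ∃ (a : ℕ) (v : V), v ≠ 0 ∧ f v = a • v := by
  have hp := Fact.out (p := p.Prime)
  have : Module.Finite (ZMod p) V := Module.Finite.of_finite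
  let g : Module.End (ZMod p) V := AddMonoidHom.toZModLinearMap p f
  have hg : g ^ (p - 1) = 1 := LinearMap.ext fun v =>
    (Module.End.pow_apply g _ v).trans <|
      (congrFun (AddMonoid.End.coe_pow V f _) v).symm.trans (DFunLike.congr_fun hf v)
  have hdvd : minpoly (ZMod p) g ∣ Polynomial.X ^ p - Polynomial.X := by
    apply minpoly.dvd
    rw [map_sub, map_pow, Polynomial.aeval_X, sub_eq_zero]
    simpa only [hg, one_mul] using (pow_sub_one_mul hp.ne_zero g).symm
  have hsplits : (Polynomial.X ^ p - Polynomial.X : Polynomial (ZMod p)).Splits := by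
    simpa using FiniteField.splits_X_pow_nat_card_sub_X p (K := ZMod p)
  obtain ⟨a, ha⟩ := (hsplits.of_dvd (FiniteField.X_pow_card_sub_X_ne_zero (ZMod p) hp.one_lt)
    hdvd).exists_eval_eq_zero (minpoly.degree_pos (Algebra.IsIntegral.isIntegral g)).ne'
  obtain ⟨v, hv⟩ := (Module.End.hasEigenvalue_of_isRoot ha).exists_hasEigenvector
  refine ⟨a.val, v, hv.2, ?_⟩
  rw [← Nat.cast_smul_eq_nsmul (ZMod p), ZMod.natCast_zmod_val]
  exact hv.apply_eq_smul

theorem exists_apply_eq_pow_of_pow_sub_one_eq_one {A : Type*} [CommGroup A] [Finite A]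
    [Nontrivial A] (hA : ∀ x : A, x ^ p = 1) {φ : MulAut A} (hφ : φ ^ (p - 1) = 1) :
    ∃ (a : ℕ) (x : A), x ≠ 1 ∧ φ x = x ^ a := by
  let _ : Module (ZMod p) (Additive A) := AddCommGroup.zmodModule fun x => hA x.toMul
  have hf : monoidEndToAdditive A (MulDistribMulAction.toMonoidEnd (MulAut A) A φ) ^ (p - 1) =
      1 := by
    rw [← map_pow, ← map_pow, hφ, map_one, map_one]
  exact exists_apply_eq_nsmul_of_pow_sub_one_eq_one hf

end Eigenvalue

section MinimalNormal

variable {G : Type*} [Group G]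

theorem normal_map_subtype_of_conjNormal_mem {N : Subgroup G} [N.Normal] {K : Subgroup N}
    (h : ∀ g : G, ∀ y ∈ K, MulAut.conjNormal g y ∈ K) : (K.map N.subtype).Normal := by
  refine ⟨?_⟩
  rintro _ ⟨y, hy, rfl⟩ g
  exact ⟨_, h g y hy, MulAut.conjNormal_apply g y⟩

theorem exists_isMinimalNormal_le [Finite G] {K : Subgroup G} [K.Normal] (hK : K ≠ ⊥) :
    ∃ N ≤ K, IsMinimalNormal N := by
  obtain ⟨N, hNK, hN⟩ := Set.Finite.exists_le_minimal
    (s := {N : Subgroup G | N.Normal ∧ N ≠ ⊥}) (Set.toFinite _) ⟨inferInstance, hK⟩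
  exact ⟨N, hNK, hN.1.1, hN.1.2, fun M hM hMN hne => hMN.antisymm (hN.2 ⟨hM, hne⟩ hMN)⟩

theorem inf_center_ne_bot_of_isPGroup [Finite G] {p : ℕ} (hp : p.Prime) {N : Subgroup G}
    [N.Normal] (hN : N ≠ ⊥) (hNp : IsPGroup p N)
    (hindex : ∃ k, (centralizer (N : Set G)).index = p ^ k) : N ⊓ center G ≠ ⊥ := by
  have := Fact.mk hp
  have : Nontrivial N := (nontrivial_iff_ne_bot N).2 hN
  have hrange : IsPGroup p (MulAut.conjNormal (H := N)).range := by
    rwa [IsPGroup.iff_card, ← index_ker, ker_conjNormal]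
  obtain ⟨k, hk0, hk⟩ := hNp.nontrivial_iff_card.1 this
  obtain ⟨y, hy, hne⟩ := hrange.exists_fixed_point_of_prime_dvd_card_of_fixed_point N
    (hk ▸ dvd_pow_self p hk0.ne') (a := 1) fun φ => map_one (φ : MulAut N)
  refine ne_bot_iff_exists_ne_one.2 ⟨⟨y, y.2, mem_center_iff.2 fun g => ?_⟩,
    fun h => hne (Subtype.ext (congrArg Subtype.val h).symm)⟩
  have hfix := congrArg Subtype.val (hy ⟨MulAut.conjNormal g, g, rfl⟩)
  exact mul_inv_eq_iff_eq_mul.1 ((MulAut.conjNormal_apply g y).symm.trans hfix)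

namespace IsMinimalNormal

variable {N : Subgroup G}

theorem le_of_inf_ne_bot (hN : IsMinimalNormal N) {H : Subgroup G} [H.Normal]
    (h : N ⊓ H ≠ ⊥) : N ≤ H :=
  have := hN.1
  inf_eq_left.1 (hN.2.2 _ inferInstance inf_le_left h)

theorem eq_top_of_normal_map_subtype (hN : IsMinimalNormal N) {K : Subgroup N}
    [(K.map N.subtype).Normal] (hK : K ≠ ⊥) : K = ⊤ := by
  have := hN.2.2 (K.map N.subtype) inferInstance (map_subtype_le K)
    (by rwa [Ne, map_eq_bot_iff_of_injective K N.subtype_injective])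
  rw [eq_top_iff]
  intro x _
  obtain ⟨y, hy, hyx⟩ := this.ge x.2
  exact Subtype.ext hyx ▸ hy

theorem isMulCommutative (hN : IsMinimalNormal N) [Group.IsSolvable N] : IsMulCommutative N := by
  have := hN.1
  have : Nontrivial N := (nontrivial_iff_ne_bot N).2 hN.2.1
  rw [← commutator_eq_bot_iff]
  by_contra h
  exact (Group.IsSolvable.commutator_lt_top_of_nontrivial N).ne (hN.eq_top_of_normal_map_subtype h)

theorem exists_prime_pow_eq_one [Finite G] (hN : IsMinimalNormal N) [IsMulCommutative N] :
    ∃ p, p.Prime ∧ ∀ x : N, x ^ p = 1 := by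
  have := hN.1
  open scoped IsMulCommutative in
  obtain ⟨p, hp, hdvd⟩ := Nat.exists_prime_and_dvd (mt card_eq_one.1 hN.2.1)
  have := Fact.mk hp
  obtain ⟨x, hx⟩ := exists_prime_orderOf_dvd_card' p hdvd
  have : ((powMonoidHom p : N →* N).ker.map N.subtype).Normal :=
    normal_map_subtype_of_conjNormal_mem fun g y (hy : y ^ p = 1) =>
      show MulAut.conjNormal g y ^ p = 1 by rw [← map_pow, hy, map_one]
  have hker : (powMonoidHom p : N →* N).ker = ⊤ := by
    refine hN.eq_top_of_normal_map_subtype (ne_bot_iff_exists_ne_one.2 ⟨⟨x, ?_⟩, fun h => ?_⟩)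
    · exact hx ▸ pow_orderOf_eq_one x
    · exact hp.ne_one (hx ▸ orderOf_eq_one_iff.2 (congrArg Subtype.val h))
  exact ⟨p, hp, fun x => hker.ge (mem_top x)⟩

/-- If `G` acts on `N` through an abelian group of exponent dividing `p - 1`, then each element has
an eigenvalue in `ZMod p`, and the eigenspace is `G`-invariant because the action is abelian. Hence
`G` acts by scalars, and `N` has no proper nontrivial subgroups. -/
theorem isCyclic_of_abelianPowResidual_le_centralizer [Finite G] (hN : IsMinimalNormal N)
    [IsMulCommutative N] {p : ℕ} (hp : p.Prime) (hexp : ∀ x : N, x ^ p = 1)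
    (hW : abelianPowResidual (p - 1) G ≤ centralizer N) : IsCyclic N := by
  have := hN.1
  have := Fact.mk hp
  have : Nontrivial N := (nontrivial_iff_ne_bot N).2 hN.2.1
  rw [← ker_conjNormal] at hW
  open scoped IsMulCommutative in
  have hscalar (g : G) : ∃ a : ℕ, ∀ y : N, MulAut.conjNormal g y = y ^ a := by
    obtain ⟨a, x, hx, hxa⟩ := exists_apply_eq_pow_of_pow_sub_one_eq_one hexp
      (φ := MulAut.conjNormal g) (by rw [← map_pow]; exact hW (pow_mem_abelianPowResidual g))
    let K : Subgroup N := (MulAut.conjNormal g).toMonoidHom.eqLocus (powMonoidHom a)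
    have : (K.map N.subtype).Normal := by
      refine normal_map_subtype_of_conjNormal_mem fun h y hy => ?_
      have hcomm : MulAut.conjNormal (H := N) (g * h) = MulAut.conjNormal (h * g) := by
        rw [← div_eq_one, ← map_div, ← MonoidHom.mem_ker, div_eq_mul_inv, mul_inv_rev, ← mul_assoc]
        exact hW (le_sup_left (a := commutator G)
          (commutator_mem_commutator (mem_top g) (mem_top h)))
      change MulAut.conjNormal g (MulAut.conjNormal h y) = (MulAut.conjNormal h y) ^ a
      rw [← MulAut.mul_apply, ← map_mul, hcomm, map_mul, MulAut.mul_apply, ← map_pow]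
      exact congrArg _ hy
    have hK : K = ⊤ := hN.eq_top_of_normal_map_subtype
      (ne_bot_iff_exists_ne_one.2 ⟨⟨x, hxa⟩, fun h => hx (congrArg Subtype.val h)⟩)
    exact ⟨a, fun y => hK.ge (mem_top y)⟩
  obtain ⟨x, hx⟩ := exists_ne (1 : N)
  have : ((zpowers x).map N.subtype).Normal := normal_map_subtype_of_conjNormal_mem
    fun g y hy => by obtain ⟨a, ha⟩ := hscalar g; exact ha y ▸ pow_mem hy a
  exact isCyclic_iff_exists_zpowers_eq_top.2
    ⟨x, hN.eq_top_of_normal_map_subtype (zpowers_ne_bot.2 hx)⟩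

theorem le_center_of_isPGroup [Finite G] (hN : IsMinimalNormal N) {p : ℕ} (hp : p.Prime)
    (hNp : IsPGroup p N) (hindex : ∃ k, (centralizer (N : Set G)).index = p ^ k) :
    N ≤ center G :=
  have := hN.1
  hN.le_of_inf_ne_bot (inf_center_ne_bot_of_isPGroup hp hN.2.1 hNp hindex)

/-- Since `Y` is supersoluble, `N` contains a normal subgroup of `Y` of order `p`, which the
residual centralizes; the centralizer in `N` of the residual is normal in `G`. -/
theorem map_abelianPowResidual_le_centralizer [Finite G] (hN : IsMinimalNormal N) {p : ℕ}
    (hp : p.Prime) (hNp : IsPGroup p N) {Y : Subgroup G} [Y.Normal] (hY : IsSupersoluble Y)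
    (hNY : N ≤ Y) : (abelianPowResidual (p - 1) Y).map Y.subtype ≤ centralizer N := by
  have := hN.1
  have := Fact.mk hp
  have hne : N.subgroupOf Y ≠ ⊥ := fun h =>
    hN.2.1 (disjoint_self.1 ((subgroupOf_eq_bot.1 h).mono_right hNY))
  obtain ⟨Q, _, hQ, hQN⟩ := hY.exists_prime_card_normal_le hne
  have hQp : Nat.card Q = p :=
    (hNp.comap_subtype.to_le hQN).card_eq_or_dvd.elim (absurd · hQ.ne_one)
      fun h => ((Nat.prime_dvd_prime_iff_eq hp hQ).1 h).symm
  have hQW := abelianPowResidual_le_centralizer_of_prime hp hQp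
  rw [le_centralizer_iff]
  refine hN.le_of_inf_ne_bot (ne_bot_of_le_ne_bot (b := Q.map Y.subtype) ?_ ?_)
  · rw [Ne, map_eq_bot_iff_of_injective Q Y.subtype_injective]
    exact (one_lt_card_iff_ne_bot Q).1 hQ.one_lt
  · refine le_inf (map_le_iff_le_comap.2 hQN) ?_
    rw [coe_map]
    exact (map_mono (le_centralizer_iff.1 hQW)).trans (map_centralizer_le_centralizer_image _ _)

end IsMinimalNormal

end MinimalNormal

section Fusion

open scoped Pointwise

variable {G : Type*} [Group G] {p : ℕ}

theorem centralizer_subgroupOf {H K : Subgroup G} (h : H ≤ K) :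
    centralizer (H.subgroupOf K : Set K) = (centralizer (H : Set G)).subgroupOf K := by
  ext x
  refine ⟨fun hx y hy => congrArg Subtype.val (hx ⟨y, h hy⟩ hy), fun hx y hy => Subtype.ext ?_⟩
  exact hx y hy

theorem lt_inf_normalizer_of_isNilpotent {H K : Subgroup G} [Group.IsNilpotent K] (h : H < K) :
    H < K ⊓ normalizer (H : Set G) := by
  have hlt := Group.normalizerCondition_of_isNilpotent (H.subgroupOf K)
    (lt_top_iff_ne_top.2 (mt subgroupOf_eq_top.1 h.not_ge))
  rw [← subgroupOf_normalizer_eq h.le] at hlt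
  refine lt_of_le_of_ne (le_inf h.le le_normalizer) fun heq => hlt.ne ?_
  exact (congrArg (·.subgroupOf K) heq).trans (inf_subgroupOf_left ..)

theorem sup_sylow_eq_top_of_index_eq_pow [Finite G] [Fact p.Prime] {K : Subgroup G}
    (hK : ∃ k, K.index = p ^ k) (P : Sylow p G) : K ⊔ P = ⊤ := by
  obtain ⟨k, hk⟩ := hK
  have hcop : (p ^ k).Coprime (P : Subgroup G).index :=
    ((Nat.Prime.coprime_iff_not_dvd Fact.out).2 P.not_dvd_index).pow_left k
  exact index_eq_one.1 <| Nat.eq_one_of_dvd_coprimes hcop (hk ▸ index_dvd_of_le le_sup_left)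
    (index_dvd_of_le le_sup_right)

theorem exists_mem_smul_eq_of_index_eq_pow [Finite G] [Fact p.Prime] {K : Subgroup G} [K.Normal]
    (hK : ∃ k, K.index = p ^ k) (P Q : Sylow p G) : ∃ c ∈ K, c • P = Q := by
  obtain ⟨g, rfl⟩ := MulAction.exists_smul_eq G P Q
  have hg : g ∈ K ⊔ P := sup_sylow_eq_top_of_index_eq_pow hK P ▸ mem_top g
  obtain ⟨c, hc, s, hs, rfl⟩ := mem_sup_of_normal_left.1 hg
  exact ⟨c, hc, by rw [mul_smul, Sylow.smul_eq_iff_mem_normalizer.2 (le_normalizer hs)]⟩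

/-- Frobenius' condition: every `p`-subgroup `D` of `G` has automizer `N_G(D) / C_G(D)` a
`p`-group. -/
def HasPGroupAutomizers (p : ℕ) (G : Type*) [Group G] : Prop :=
  ∀ D : Subgroup G, IsPGroup p D →
    ∃ k, ((centralizer (D : Set G)).subgroupOf (normalizer (D : Set G))).index = p ^ k

theorem mem_smul_sylow_iff {P : Sylow p G} {g x : G} : x ∈ g • P ↔ g⁻¹ * x * g ∈ P := by
  change x ∈ MulAut.conj g • (P : Subgroup G) ↔ _
  rw [mem_pointwise_smul_iff_inv_smul_mem, ← map_inv, MulAut.smul_def, MulAut.conj_apply, inv_inv]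
  rfl

theorem exists_sylow_of_index_eq_pow [Finite G] [Fact p.Prime] {C Y : Subgroup G}
    [(C.subgroupOf Y).Normal] (hC : ∃ k, (C.subgroupOf Y).index = p ^ k) (P Q : Sylow p G) :
    ∃ (R : Sylow p G) (c : G), c ∈ C ∧ (P : Subgroup G) ⊓ Y ≤ R ∧
      (Q : Subgroup G) ⊓ Y ≤ (c • R : Sylow p G) := by
  obtain ⟨S, hPS⟩ := (P.2.comap_subtype (K := Y)).exists_le_sylow
  obtain ⟨T, hQT⟩ := (Q.2.comap_subtype (K := Y)).exists_le_sylow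
  obtain ⟨c, hc, rfl⟩ := exists_mem_smul_eq_of_index_eq_pow hC S T
  obtain ⟨R, hSR⟩ := (S.2.map Y.subtype).exists_le_sylow
  refine ⟨R, c, hc, ?_, ?_⟩
  · rw [← subgroupOf_map_subtype]
    exact (map_mono hPS).trans hSR
  · rintro x ⟨hxQ, hxY⟩
    have hx : (⟨x, hxY⟩ : Y) ∈ c • S := hQT hxQ
    rw [mem_smul_sylow_iff] at hx
    refine mem_smul_sylow_iff.2 ?_
    exact hSR ⟨_, hx, rfl⟩

namespace HasPGroupAutomizers

/-- Descending induction on `P ⊓ Q`: inside its normalizer, `P` and `Q` can be moved, by an element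
of the centralizer, to have larger intersections with a third Sylow subgroup. -/
theorem exists_mem_centralizer_smul_eq [Finite G] [Fact p.Prime] (h : HasPGroupAutomizers p G)
    (P Q : Sylow p G) : ∃ c ∈ centralizer ((P ⊓ Q : Subgroup G) : Set G), c • P = Q := by
  induction hD : (P ⊓ Q : Subgroup G) using WellFoundedGT.induction generalizing P Q with
  | _ D ih =>
    subst hD
    set D : Subgroup G := P ⊓ Q
    have := P.2.isNilpotent
    have := Q.2.isNilpotent
    by_cases hDP : D = P
    · exact ⟨1, one_mem _, (one_smul G P).trans (Sylow.ext (P.3 Q.2 (inf_eq_left.1 hDP)).symm)⟩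
    by_cases hDQ : D = Q
    · exact ⟨1, one_mem _, (one_smul G P).trans (Sylow.ext (Q.3 P.2 (inf_eq_right.1 hDQ)))⟩
    have hPlt := lt_inf_normalizer_of_isNilpotent (lt_of_le_of_ne inf_le_left hDP)
    have hQlt := lt_inf_normalizer_of_isNilpotent (lt_of_le_of_ne inf_le_right hDQ)
    obtain ⟨R, c, hc, hPR, hQR⟩ := exists_sylow_of_index_eq_pow (h D (P.2.to_le inf_le_left)) P Q
    obtain ⟨a, ha, haR⟩ := ih _ (hPlt.trans_le (le_inf inf_le_left hPR)) P R rfl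
    obtain ⟨b, hb, hbQ⟩ := ih _ (hQlt.trans_le (le_inf hQR inf_le_left)) (c • R) Q rfl
    refine ⟨b * c * a, mul_mem (mul_mem ?_ hc) ?_, by rw [mul_smul, mul_smul, haR, hbQ]⟩
    · exact centralizer_le (hQlt.le.trans (le_inf hQR inf_le_left)) hb
    · exact centralizer_le (hPlt.le.trans (le_inf inf_le_left hPR)) ha

theorem exists_mem_conj_eq [Finite G] [Fact p.Prime] (h : HasPGroupAutomizers p G)
    (P : Sylow p G) {x g : G} (hx : x ∈ P) (hgx : g * x * g⁻¹ ∈ P) :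
    ∃ s ∈ P, s * x * s⁻¹ = g * x * g⁻¹ := by
  have hmem : g * x * g⁻¹ ∈ g • P := mem_smul_sylow_iff.2 (by simpa only [mul_assoc,
    inv_mul_cancel_left, inv_mul_cancel, mul_one] using hx)
  obtain ⟨c, hc, hcP⟩ := h.exists_mem_centralizer_smul_eq (g • P) P
  rw [← mul_smul, Sylow.smul_eq_iff_mem_normalizer] at hcP
  have hcg := sup_sylow_eq_top_of_index_eq_pow (h P P.2) (P.subtype le_normalizer) ▸
    mem_top (⟨c * g, hcP⟩ : normalizer (P : Set G))
  obtain ⟨⟨a, _⟩, ha, ⟨s, _⟩, (hs : s ∈ P), has⟩ := mem_sup_of_normal_left.1 hcg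
  have has : a * s = c * g := congrArg Subtype.val has
  have hcomm : s * x * s⁻¹ * a = a * (s * x * s⁻¹) := ha _ (mul_mem (mul_mem hs hx) (inv_mem hs))
  refine ⟨s, hs, ?_⟩
  calc s * x * s⁻¹ = a * (s * x * s⁻¹) * a⁻¹ := eq_mul_inv_of_mul_eq hcomm
    _ = (a * s) * x * (a * s)⁻¹ := by group
    _ = c * (g * x * g⁻¹) * c⁻¹ := by rw [has]; group
    _ = g * x * g⁻¹ := (eq_mul_inv_of_mul_eq (hc _ ⟨hmem, hgx⟩)).symm

/-- By the focal subgroup theorem: fusion of elements of `P` is realized inside `P`, so the focal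
subgroup of `P` is its derived subgroup. -/
theorem commutator_ne_top [Finite G] [Fact p.Prime] (h : HasPGroupAutomizers p G)
    (hdvd : p ∣ Nat.card G) : commutator G ≠ ⊤ := by
  intro htop
  let P : Sylow p G := default
  have := P.2.isNilpotent
  have : Nontrivial P := (nontrivial_iff_ne_bot _).2 (P.ne_bot_of_dvd_card hdvd)
  refine (Group.IsSolvable.commutator_lt_top_of_nontrivial P).not_ge ?_
  have hfocal : (P : Subgroup G) ≤ focalSubgroup P := by
    rw [← commutator_inf_eq_focalSubgroup P, htop, top_inf_eq]
  rw [← map_subtype_le_map_subtype, ← MonoidHom.range_eq_map, range_subtype]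
  refine hfocal.trans ((closure_le _).2 ?_)
  rintro _ ⟨hP, x, hx, u, rfl⟩
  have hux : u * x⁻¹ * u⁻¹ ∈ (P : Subgroup G) := by
    simpa only [commutatorElement_def, mul_assoc, inv_mul_cancel_left] using
      mul_mem (inv_mem hx) hP
  obtain ⟨s, hs, hsx⟩ := h.exists_mem_conj_eq P (inv_mem hx) hux
  refine ⟨_, commutator_mem_commutator (mem_top (⟨x, hx⟩ : (P : Subgroup G)))
    (mem_top ⟨s, hs⟩), ?_⟩
  change x * s * x⁻¹ * s⁻¹ = x * u * x⁻¹ * u⁻¹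
  simp only [mul_assoc] at hsx ⊢
  rw [hsx]

end HasPGroupAutomizers

end Fusion

section Solvable

variable {G : Type*} [Group G]

theorem hasPGroupAutomizers_of_isSimpleGroup [Finite G] [IsSimpleGroup G]
    (hss : ∀ H : Subgroup G, H ≠ ⊤ → IsSupersoluble H) :
    HasPGroupAutomizers (Nat.card G).minFac G := by
  intro D hD
  have hp : (Nat.card G).minFac.Prime := Nat.minFac_prime Finite.one_lt_card.ne'
  by_cases htop : normalizer (D : Set G) = ⊤
  · have := normalizer_eq_top_iff.1 htop
    obtain rfl | rfl := this.eq_bot_or_eq_top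
    · refine ⟨0, ?_⟩
      rw [pow_zero, index_eq_one, subgroupOf_eq_top]
      exact fun x _ y (hy : y = 1) => by rw [hy, one_mul, mul_one]
    · have := Fact.mk hp
      exact ((hD.of_equiv topEquiv).to_subgroup _).index _
  have hcop : (Nat.card (normalizer (D : Set G))).Coprime ((Nat.card G).minFac - 1) :=
    (Nat.coprime_of_lt_minFac (Nat.sub_ne_zero_of_lt hp.one_lt)
      (Nat.sub_one_lt hp.ne_zero)).coprime_dvd_left (card_subgroup_dvd_card _)
  obtain ⟨k, hk⟩ := ((hss _ htop).isPNilpotent_of_coprime hp hcop).index_centralizer_eq_pow hp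
    (D := D.subgroupOf (normalizer (D : Set G))) hD.comap_subtype
  exact ⟨k, by rw [← hk, centralizer_subgroupOf le_normalizer]⟩

theorem isSupersoluble_of_ne_top_of_surjective {H : Type*} [Group H]
    (hss : ∀ K : Subgroup G, K ≠ ⊤ → IsSupersoluble K) {f : G →* H} (hf : Function.Surjective f)
    {K : Subgroup H} (hK : K ≠ ⊤) : IsSupersoluble K := by
  refine (hss (K.comap f) fun h => hK ?_).of_surjective
    (f.subgroupComap_surjective_of_surjective K hf)
  exact comap_injective hf (h.trans (comap_top f).symm)

theorem isSolvable_of_forall_ne_top_isSupersoluble [Finite G]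
    (hss : ∀ H : Subgroup G, H ≠ ⊤ → IsSupersoluble H) : Group.IsSolvable G := by
  induction hn : Nat.card G using Nat.strong_induction_on generalizing G with
  | _ n ih =>
    subst hn
    by_cases h : ∃ N : Subgroup G, N.Normal ∧ N ≠ ⊥ ∧ N ≠ ⊤
    · obtain ⟨N, _, hbot, htop⟩ := h
      have := (hss N htop).isSolvable
      have hsurj := QuotientGroup.mk'_surjective N
      have : Group.IsSolvable (G ⧸ N) := ih _ (card_quotient_lt_of_ne_bot hbot)
        (fun _ => isSupersoluble_of_ne_top_of_surjective hss hsurj) rfl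
      exact (Group.isSolvable_iff_subgroup_quotient N).2 ⟨inferInstance, inferInstance⟩
    push Not at h
    by_contra hsol
    have : Nontrivial G := not_subsingleton_iff_nontrivial.1 fun _ => hsol inferInstance
    have : IsSimpleGroup G := ⟨fun N hN => or_iff_not_imp_left.2 (h N hN)⟩
    have := Fact.mk (Nat.minFac_prime (Finite.one_lt_card (α := G)).ne')
    have hcomm : commutator G = ⊥ := (Normal.eq_bot_or_eq_top inferInstance).resolve_right
      ((hasPGroupAutomizers_of_isSimpleGroup hss).commutator_ne_top (Nat.minFac_dvd _))
    have := (commutator_eq_bot_iff G).1 hcomm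
    exact hsol (Group.isSolvable_of_comm fun a b => mul_comm' a b)

end Solvable

section Frattini

variable {G : Type*} [Group G] [Finite G] {p q : ℕ}

theorem normal_map_subtype_sylow_of_le_frattini [Fact q.Prime] {N T : Subgroup G}
    [T.Normal] (hN : N ≤ frattini G) (hNT : ∃ k, N.relIndex T = q ^ k) (P : Sylow q T) :
    ((P : Subgroup T).map T.subtype).Normal := by
  have hT : T ≤ N ⊔ (P : Subgroup T).map T.subtype := by
    have := congrArg (Subgroup.map T.subtype) (sup_sylow_eq_top_of_index_eq_pow hNT P)
    rw [Subgroup.map_sup, ← MonoidHom.range_eq_map, range_subtype, subgroupOf_map_subtype] at this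
    exact this.ge.trans (sup_le_sup_right inf_le_left _)
  refine normalizer_eq_top_iff.1 (frattini_nongenerating (top_le_iff.1 ?_))
  rw [← Sylow.normalizer_sup_eq_top P]
  exact sup_le le_sup_left <|
    hT.trans (sup_le (hN.trans le_sup_right) (le_normalizer.trans le_sup_left))

theorem not_dvd_card_of_not_dvd_index_of_le_frattini (hp : p.Prime) {F : Subgroup G} [F.Normal]
    (hF : F ≤ frattini G) (hindex : ¬ p ∣ F.index) : ¬ p ∣ Nat.card G := by
  have := Fact.mk hp
  let P : Sylow p G := default
  have hPF : (P : Subgroup G) ≤ F := by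
    obtain ⟨k, hk⟩ := IsPGroup.iff_card.1 P.2
    exact le_of_coprime_card_index (hk ▸ (hp.coprime_iff_not_dvd.2 hindex).pow_left k)
  have : (P : Subgroup G).Normal := by
    have := normal_map_subtype_sylow_of_le_frattini hF ⟨0, F.relIndex_self⟩ (P.subtype hPF)
    rwa [Sylow.coe_subtype, subgroupOf_map_subtype, inf_eq_left.2 hPF] at this
  obtain ⟨K, hK⟩ := exists_right_complement'_of_coprime P.card_coprime_index
  have hKtop : K = ⊤ := by
    refine frattini_nongenerating (top_le_iff.1 ?_)
    rw [← hK.sup_eq_top, sup_comm]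
    exact sup_le_sup_left (hPF.trans hF) _
  exact fun hdvd => P.ne_bot_of_dvd_card hdvd (disjoint_top.1 (hKtop ▸ hK.disjoint))

theorem exists_normal_disjoint_of_le_frattini (hp : p.Prime) (hq : q.Prime) (hqp : q ≠ p)
    {N T : Subgroup G} [T.Normal] (hNp : IsPGroup p N) (hN : N ≤ frattini G)
    (hNT : N.relIndex T = q) : ∃ S : Subgroup G, S.Normal ∧ S ≠ ⊥ ∧ Disjoint N S := by
  have := Fact.mk hp
  have := Fact.mk hq
  let P : Sylow q T := default
  refine ⟨_, normal_map_subtype_sylow_of_le_frattini hN ⟨1, by rw [hNT, pow_one]⟩ P, ?_,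
    IsPGroup.disjoint_of_ne p q hqp.symm _ _ hNp (P.2.map _)⟩
  rw [Ne, map_eq_bot_iff_of_injective _ T.subtype_injective]
  exact P.ne_bot_of_dvd_card (hNT ▸ relIndex_dvd_card N T)

theorem IsSupersoluble.isPGroup_abelianPowResidual_or (h : IsSupersoluble G) (hp : p.Prime) :
    IsPGroup p (abelianPowResidual (p - 1) G) ∨
      ∃ Q : Subgroup G, Q.Normal ∧ (Nat.card Q).Prime ∧ Nat.card Q ≠ p := by
  obtain ⟨K, _, hpK, k, hk⟩ := (h.isPNilpotent_abelianPowResidual hp).exists_characteristic hp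
  have hinj := (abelianPowResidual (p - 1) G).subtype_injective
  by_cases hK : K = ⊥
  · exact .inl (.of_card (n := k) (by rw [← index_bot, ← hK, hk]))
  · obtain ⟨Q, hQn, hQ, hQK⟩ := h.exists_prime_card_normal_le
      (mt (map_eq_bot_iff_of_injective K hinj).1 hK)
    refine .inr ⟨Q, hQn, hQ, fun hQp => hpK ?_⟩
    have := card_dvd_of_le hQK
    rwa [hQp, card_map_of_injective hinj] at this

namespace IsMinimalNormal

variable {N : Subgroup G}

theorem le_centralizer_of_isPGroup (hN : IsMinimalNormal N) (hp : p.Prime) (hNp : IsPGroup p N)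
    {W : Subgroup G} [W.Normal] (hW : IsPGroup p W) : W ≤ centralizer N := by
  have := hN.1
  have := Fact.mk hp
  by_cases hNW : N ⊓ W = ⊥
  · exact fun w hw x hx =>
      commute_of_normal_of_disjoint N W inferInstance inferInstance (disjoint_iff.2 hNW) x w hx hw
  have hne : N.subgroupOf W ⊓ center W ≠ ⊥ := by
    refine inf_center_ne_bot_of_isPGroup hp ?_ (hNp.comap_subtype) (hW.index _)
    rwa [Ne, subgroupOf_eq_bot, disjoint_iff]
  have hle : N ≤ (center W).map W.subtype := by
    refine hN.le_of_inf_ne_bot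
      (ne_bot_of_le_ne_bot (b := (N.subgroupOf W ⊓ center W).map W.subtype) ?_ ?_)
    · rwa [Ne, map_eq_bot_iff_of_injective _ W.subtype_injective]
    · exact (map_inf_le _ _ _).trans (inf_le_inf_right _ (map_comap_le _ _))
  intro w hw x hx
  obtain ⟨z, hz, rfl⟩ := hle hx
  exact congrArg Subtype.val (mem_center_iff.1 hz ⟨w, hw⟩).symm

theorem isSupersoluble_or_exists_normal_disjoint_of_le_frattini (hN : IsMinimalNormal N)
    [IsMulCommutative N] (hp : p.Prime) (hexp : ∀ x : N, x ^ p = 1) (hfrat : N ≤ frattini G)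
    (h : IsSupersolubleAbove N) :
    IsSupersoluble G ∨ ∃ S : Subgroup G, S.Normal ∧ S ≠ ⊥ ∧ Disjoint N S := by
  have := hN.1
  have hNp : IsPGroup p N := fun x => ⟨1, by rw [pow_one, hexp]⟩
  have hquot := isSupersoluble_quotient_iff.2 h
  have hsurj := QuotientGroup.mk'_surjective N
  obtain hWp | ⟨Q, _, hQ, hQp⟩ := hquot.isPGroup_abelianPowResidual_or hp
  · left
    have hW : IsPGroup p (abelianPowResidual (p - 1) G) :=
      (hWp.comap_of_ker_isPGroup (QuotientGroup.mk' N) (by rwa [QuotientGroup.ker_mk'])).to_le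
        (map_le_iff_le_comap.1 (map_abelianPowResidual hsurj).le)
    have := hN.isCyclic_of_abelianPowResidual_le_centralizer hp hexp
      (hN.le_centralizer_of_isPGroup hp hNp hW)
    exact h.isSupersoluble_of_isCyclic
  · right
    refine exists_normal_disjoint_of_le_frattini (T := Q.comap (QuotientGroup.mk' N)) hp hQ hQp
      hNp hfrat ?_
    have := relIndex_ker (Q.comap (QuotientGroup.mk' N)) (QuotientGroup.mk' N)
    rwa [QuotientGroup.ker_mk', map_comap_eq_self_of_surjective hsurj] at this

end IsMinimalNormal

/-- If two nontrivial normal subgroups meet trivially, `G` is a subdirect product of smaller groups.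
A minimal normal subgroup inside the Frattini subgroup leaves room for this unless it is cyclic. -/
theorem IsSupersolubleAbove.isSupersoluble_of_le_frattini {N : Subgroup G} [N.Normal]
    (h : IsSupersolubleAbove N) (hN : N ≤ frattini G) : IsSupersoluble G := by
  induction hn : Nat.card G using Nat.strong_induction_on generalizing G with
  | _ n ih =>
    subst hn
    by_cases hbot : N = ⊥
    · exact isSupersoluble_iff.2 (hbot ▸ h)
    have habove (S : Subgroup G) [S.Normal] (hS : S ≠ ⊥) : IsSupersolubleAbove S := by
      have hsurj := QuotientGroup.mk'_surjective S
      have : (N.map (QuotientGroup.mk' S)).Normal := Normal.map inferInstance _ hsurj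
      exact isSupersoluble_quotient_iff.1 <| ih _ (card_quotient_lt_of_ne_bot hS) (h.map hsurj)
        (map_le_iff_le_comap.2 (hN.trans (frattini_le_comap_frattini_of_surjective hsurj))) rfl
    obtain ⟨L, hLN, hL⟩ := exists_isMinimalNormal_le hbot
    have := hL.1
    have hLfrat := hLN.trans hN
    have := frattini_nilpotent (G := G)
    have : Group.IsSolvable L :=
      Group.isSolvable_of_isSolvable_injective (inclusion_injective hLfrat)
    have := hL.isMulCommutative
    obtain ⟨p, hp, hexp⟩ := hL.exists_prime_pow_eq_one
    obtain hss | ⟨S, _, hS, hdisj⟩ := hL.isSupersoluble_or_exists_normal_disjoint_of_le_frattini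
      hp hexp hLfrat (habove L hL.2.1)
    · exact hss
    · exact isSupersoluble_iff.2 (hdisj.eq_bot ▸ (habove L hL.2.1).inf (habove S hS))

theorem isSupersolubleAbove_sInf {S : Set (Subgroup G)}
    (hS : ∀ N ∈ S, N.Normal ∧ IsSupersolubleAbove N) : IsSupersolubleAbove (sInf S) := by
  induction S, S.toFinite using Set.Finite.induction_on with
  | empty =>
    rw [sInf_empty]
    exact isSupersolubleAbove_top
  | @insert N T _ _ ih =>
    obtain ⟨_, hN⟩ := hS N (Set.mem_insert N T)
    rw [sInf_insert, inf_comm]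
    exact (ih fun M hM => hS M (Set.mem_insert_of_mem N hM)).inf hN

theorem isSupersoluble_of_forall_isCoatom
    (h : ∀ M : Subgroup G, IsCoatom M → IsSupersolubleAbove M.normalCore) : IsSupersoluble G := by
  have hcore : IsSupersolubleAbove (sInf (normalCore '' {M : Subgroup G | IsCoatom M})) := by
    refine isSupersolubleAbove_sInf ?_
    rintro _ ⟨M, hM, rfl⟩
    exact ⟨inferInstance, h M hM⟩
  have hle : sInf (normalCore '' {M : Subgroup G | IsCoatom M}) ≤ frattini G :=
    le_iInf₂ fun M hM => (sInf_le (Set.mem_image_of_mem _ hM)).trans M.normalCore_le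
  exact (hcore.mono hle).isSupersoluble_of_le_frattini le_rfl

end Frattini

section Centralizer

theorem eq_pow_of_eq_mul_minFac_pow {p n m k : ℕ} (hp : p.Prime) (hpn : p ∣ n)
    (hn : n = m * n.minFac ^ k) (hm : ∀ r, r.Prime → r ∣ m → r ∣ p - 1) : n = p ^ k := by
  have hq : n.minFac.Prime := Nat.minFac_prime fun h1 => hp.ne_one (Nat.dvd_one.1 (h1 ▸ hpn))
  have hlt (r : ℕ) (hr : r.Prime) (hrm : r ∣ m) : r < p :=
    (Nat.le_of_dvd (Nat.sub_pos_of_lt hp.one_lt) (hm r hr hrm)).trans_lt (Nat.pred_lt hp.ne_zero)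
  have hpq : p = n.minFac := by
    have hdvd : p ∣ m * n.minFac ^ k := hn ▸ hpn
    have hpk := (hp.dvd_mul.1 hdvd).resolve_left fun hpm => (hlt p hp hpm).false
    exact (Nat.prime_dvd_prime_iff_eq hp hq).1 (hp.dvd_of_dvd_pow hpk)
  have hm1 : m = 1 := by
    by_contra hne
    obtain ⟨r, hr, hrm⟩ := Nat.exists_prime_and_dvd hne
    have hrn : r ∣ n := hn ▸ hrm.mul_right _
    exact (hlt r hr hrm).not_ge (hpq ▸ Nat.minFac_le_of_dvd hr.two_le hrn)
  rwa [hm1, one_mul, ← hpq] at hn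

variable {G : Type*} [Group G] [Finite G] {p r : ℕ}

theorem IsSupersoluble.isPNilpotent_minFac (h : IsSupersoluble G) (hG : Nat.card G ≠ 1) :
    IsPNilpotent (Nat.card G).minFac G := by
  have hprime := Nat.minFac_prime hG
  refine h.isPNilpotent_of_coprime hprime (Nat.Coprime.symm (Nat.coprime_of_dvd ?_))
  intro k hk hk1 hkG
  have := Nat.minFac_le_of_dvd hk.two_le hkG
  have := Nat.le_of_dvd (Nat.sub_pos_of_lt hprime.one_lt) hk1
  have := hprime.one_lt
  omega

namespace IsMinimalNormal

variable {N : Subgroup G}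

theorem dvd_sub_one_of_dvd_relIndex_centralizer (hN : IsMinimalNormal N) (hp : p.Prime)
    (hNp : IsPGroup p N) {Y : Subgroup G} [Y.Normal] (hY : IsSupersoluble Y) (hNY : N ≤ Y)
    (hr : r.Prime) (hdvd : r ∣ (centralizer (N : Set G)).relIndex Y) : r ∣ p - 1 :=
  dvd_of_dvd_index_abelianPowResidual hr <| hdvd.trans <| index_dvd_of_le <|
    map_le_iff_le_comap.1 (hN.map_abelianPowResidual_le_centralizer hp hNp hY hNY)

theorem isSupersoluble_of_index_centralizer_eq_pow (hN : IsMinimalNormal N) [IsMulCommutative N]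
    (hp : p.Prime) (hexp : ∀ x : N, x ^ p = 1)
    (hindex : ∃ k, (centralizer (N : Set G)).index = p ^ k) (h : IsSupersolubleAbove N) :
    IsSupersoluble G := by
  have := hN.1
  have hcenter := hN.le_center_of_isPGroup hp (fun x => ⟨1, by rw [pow_one, hexp]⟩) hindex
  have := hN.isCyclic_of_abelianPowResidual_le_centralizer hp hexp
    (le_top.trans (centralizer_eq_top_iff_subset.2 hcenter).ge)
  exact h.isSupersoluble_of_isCyclic

/-- For `q` the smallest prime divisor of the order of `G / C_G(N)`, Clifford's theorem applied to
the preimage of the normal `q`-complement leaves only prime divisors of `p - 1` in the complement,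
so that `q = p` and the complement is trivial. -/
theorem not_dvd_index_centralizer (hN : IsMinimalNormal N) [IsMulCommutative N] (hp : p.Prime)
    (hexp : ∀ x : N, x ^ p = 1) (h : IsSupersolubleAbove N) (hG : IsMinimalNonsupersoluble G) :
    ¬ p ∣ (centralizer (N : Set G)).index := by
  have := hN.1
  set C := centralizer (N : Set G)
  have hNC : N ≤ C := le_centralizer N
  intro hpC
  have hcard : Nat.card (G ⧸ C) ≠ 1 := fun h1 => hp.ne_one (Nat.dvd_one.1 (hpC.trans h1.dvd))
  obtain ⟨K, _, hqK, k, hk⟩ :=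
    (isSupersoluble_quotient_iff.2 (h.mono hNC)).isPNilpotent_minFac hcard
  have hsurj := QuotientGroup.mk'_surjective C
  set Y := K.comap (QuotientGroup.mk' C)
  have hCY : C.relIndex Y = Nat.card K := by
    have := relIndex_ker Y (QuotientGroup.mk' C)
    rwa [QuotientGroup.ker_mk', map_comap_eq_self_of_surjective hsurj] at this
  have hYtop : Y ≠ ⊤ := by
    intro hY
    rw [hY, relIndex_top_right] at hCY
    exact hqK (hCY ▸ Nat.minFac_dvd _)
  have hK (r : ℕ) (hr : r.Prime) (hrK : r ∣ Nat.card K) : r ∣ p - 1 :=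
    hN.dvd_sub_one_of_dvd_relIndex_centralizer hp (fun x => ⟨1, by rw [pow_one, hexp]⟩)
      (hG.2 Y hYtop) (hNC.trans (QuotientGroup.le_comap_mk' C K)) hr (hCY ▸ hrK)
  have hindex : C.index = Nat.card K * C.index.minFac ^ k := by
    rw [index_eq_card, ← hk, K.card_mul_index]
  have hpow := eq_pow_of_eq_mul_minFac_pow hp hpC hindex hK
  exact hG.1 (hN.isSupersoluble_of_index_centralizer_eq_pow hp hexp ⟨k, hpow⟩ h)

end IsMinimalNormal

end Centralizer

section Supplements

variable {G : Type*} [Group G] {A B C D M : Subgroup G}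

open Pointwise in
theorem sup_inf_assoc_of_coe_sup_eq_mul
    (h : ((A ⊔ B : Subgroup G) : Set G) = (A : Set G) * (B : Set G)) (hAC : A ≤ C) :
    (A ⊔ B) ⊓ C = A ⊔ B ⊓ C := by
  refine le_antisymm ?_ (sup_le (le_inf le_sup_left hAC) (inf_le_inf_right _ le_sup_right))
  rw [← SetLike.coe_subset_coe, coe_inf, h, ← mul_inf_assoc A B C hAC, Set.mul_subset_iff]
  exact fun _ ha _ hb => mul_mem_sup ha hb

theorem inf_normal_of_sup_eq_top [D.Normal] (hMD : M ⊔ D = ⊤) (hD : ⁅D, D⁆ ≤ M) :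
    (M ⊓ D).Normal := by
  rw [← normalizer_eq_top_iff, ← top_le_iff, ← hMD]
  refine sup_le ((le_inf le_normalizer ?_).trans inf_normalizer_le_normalizer_inf) ?_
  · exact le_normalizer_of_normal
  · exact le_normalizer_iff_commutator_le_right.2 <| le_inf
      ((commutator_mono le_rfl inf_le_right).trans hD) (commutator_le_left D _)

theorem sup_eq_top_of_isCoatom_of_not_le (hM : IsCoatom M) (hDM : ¬ D ≤ M) : M ⊔ D = ⊤ :=
  codisjoint_iff.1 (hM.not_le_iff_codisjoint.1 hDM)

end Supplements

section Maximal

variable {G : Type*} [Group G] {H M : Subgroup G}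

theorem isCoatom_subgroupOf_iff_covBy (hHM : H ≤ M) : IsCoatom (H.subgroupOf M) ↔ H ⋖ M :=
  let e : Subgroup M ≃o Set.Iic M := MapSubtype.orderIso M
  (e.symm.isCoatom_iff ⟨H, hHM⟩).trans (covBy_iff_coatom_Iic hHM).symm

theorem isMaximalIn_iff_covBy : IsMaximalIn H M ↔ H ⋖ M :=
  ⟨fun h => (isCoatom_subgroupOf_iff_covBy h.1).1 h.2,
    fun h => ⟨h.le, (isCoatom_subgroupOf_iff_covBy h.le).2 h⟩⟩

theorem isNMaximal_two_iff : IsNMaximal 2 H ↔ ∃ M : Subgroup G, IsCoatom M ∧ H ⋖ M := by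
  simp only [IsNMaximal, isMaximalIn_iff_covBy, exists_eq_left, covBy_top_iff]

end Maximal

section Residual

variable {G : Type*} [Group G] {N : Subgroup G}

theorem ssResidual_eq_sInf :
    ssResidual G = sInf {N : Subgroup G | N.Normal ∧ IsSupersolubleAbove N} := by
  rw [sInf_eq_iInf]
  refine iInf_congr fun N => iInf_congr_Prop ⟨?_, ?_⟩ fun _ => rfl
  · rintro ⟨_, h⟩
    exact ⟨inferInstance, isSupersoluble_quotient_iff.1 h⟩
  · rintro ⟨_, h⟩
    exact ⟨inferInstance, isSupersoluble_quotient_iff.2 h⟩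

theorem ssResidual_le [N.Normal] (h : IsSupersolubleAbove N) : ssResidual G ≤ N :=
  ssResidual_eq_sInf.trans_le (sInf_le ⟨inferInstance, h⟩)

instance normal_ssResidual : (ssResidual G).Normal := by
  rw [ssResidual_eq_sInf, sInf_eq_iInf']
  exact normal_iInf_normal fun N => N.2.1

theorem isSupersolubleAbove_ssResidual [Finite G] : IsSupersolubleAbove (ssResidual G) := by
  rw [ssResidual_eq_sInf]
  exact isSupersolubleAbove_sInf fun N hN => hN

end Residual

section Subnormal

variable {G : Type*} [Group G] {H M : Subgroup G}

/-- One step of a chain witnessing `𝔘`-subnormality. -/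
def USubnormalStep (H K : Subgroup G) : Prop :=
  H ≤ K ∧ IsSupersolubleAbove (H.subgroupOf K).normalCore

theorem isUSubnormal_iff : IsUSubnormal H ↔ Relation.ReflTransGen USubnormalStep H ⊤ := by
  simp only [IsUSubnormal, reflTransGen_iff_exists_fin, USubnormalStep,
    isSupersoluble_quotient_iff]

theorem IsSupersoluble.uSubnormalStep {K : Subgroup G} (hK : IsSupersoluble K) (hHK : H ≤ K) :
    USubnormalStep H K :=
  ⟨hHK, hK.above _⟩

theorem uSubnormalStep_top_iff [Finite G] : USubnormalStep H ⊤ ↔ ssResidual G ≤ H := by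
  have hsurj : Function.Surjective (⊤ : Subgroup G).subtype := fun x => ⟨⟨x, mem_top x⟩, rfl⟩
  constructor
  · rintro ⟨-, h⟩
    have : ((H.subgroupOf ⊤).normalCore.map (⊤ : Subgroup G).subtype).Normal :=
      Normal.map inferInstance _ hsurj
    exact (ssResidual_le (h.map hsurj)).trans (map_le_iff_le_comap.2 (normalCore_le _))
  · intro h
    have := isSupersolubleAbove_ssResidual.comap (⊤ : Subgroup G).subtype
    exact ⟨le_top, this.mono (normal_le_normalCore.2 (comap_mono h))⟩

theorem IsUSubnormal.isSupersolubleAbove_normalCore_of_covBy (hU : IsUSubnormal H)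
    (hHM : H ⋖ M) : IsSupersolubleAbove (H.subgroupOf M).normalCore := by
  by_contra hnot
  have hinf (K : Subgroup G) (hK : Relation.ReflTransGen USubnormalStep H K) : K ⊓ M = H := by
    induction hK with
    | refl => exact inf_eq_left.2 hHM.le
    | @tail A B _ hAB ih =>
      have hHB : H ≤ B ⊓ M := ih.ge.trans (inf_le_inf_right _ hAB.1)
      refine (hHM.eq_or_eq hHB inf_le_right).resolve_right fun hBM => hnot ?_
      have := hAB.2.comap (inclusion (inf_eq_right.1 hBM))
      refine this.mono (normal_le_normalCore.2 fun m hm => ih.le ⟨?_, m.2⟩)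
      exact normalCore_le (A.subgroupOf B) hm
  exact hHM.lt.ne' ((top_inf_eq M).symm.trans (hinf ⊤ (isUSubnormal_iff.1 hU)))

theorem IsUSubnormal.sup_ssResidual_ne_top [Finite G] (hU : IsUSubnormal H) (hH : H ≠ ⊤) :
    H ⊔ ssResidual G ≠ ⊤ := by
  suffices h : ∃ K ≠ ⊤, H ≤ K ∧ ssResidual G ≤ K by
    obtain ⟨K, hK, hHK, hDK⟩ := h
    exact ne_top_of_le_ne_top hK (sup_le hHK hDK)
  induction isUSubnormal_iff.1 hU using Relation.ReflTransGen.head_induction_on with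
  | refl => exact absurd rfl hH
  | @head A B hAB hB ih =>
    by_cases hBtop : B = ⊤
    · exact ⟨A, hH, le_rfl, uSubnormalStep_top_iff.1 (hBtop ▸ hAB)⟩
    · obtain ⟨K, hK, hBK, hDK⟩ := ih (isUSubnormal_iff.2 hB) hBtop
      exact ⟨K, hK, hAB.1.trans hBK, hDK⟩

theorem IsSupersoluble.isUSubnormal (h : IsSupersoluble G) (H : Subgroup G) : IsUSubnormal H :=
  isUSubnormal_iff.2 (.single ((h.of_injective (subtype_injective ⊤)).uSubnormalStep le_top))

theorem isUSubnormal_of_ssResidual_le [Finite G] {K : Subgroup G} (hHK : H ≤ K)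
    (hK : IsSupersoluble K) (hD : ssResidual G ≤ K) : IsUSubnormal H :=
  isUSubnormal_iff.2 <| .tail (.single (hK.uSubnormalStep hHK)) (uSubnormalStep_top_iff.2 hD)

theorem IsMinimalNonsupersoluble.isSolvable [Finite G] (hG : IsMinimalNonsupersoluble G) :
    Group.IsSolvable G :=
  isSolvable_of_forall_ne_top_isSupersoluble hG.2

theorem IsSDH.isUSubnormal [Finite G] (hG : IsSDH G) (hM : IsCoatom M) (hHM : H ⋖ M) :
    IsUSubnormal H := by
  obtain ⟨hmin, hD⟩ := hG
  set D := ssResidual G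
  by_cases hDM : D ≤ M
  · exact isUSubnormal_of_ssResidual_le hHM.le (hmin.2 M hM.1) hDM
  have hMD := sup_eq_top_of_isCoatom_of_not_le hM hDM
  have := hmin.isSolvable
  have : IsMulCommutative D := hD.isMulCommutative
  have hcomm : ⁅D, D⁆ ≤ M :=
    (commutator_eq_bot_iff_le_centralizer.2 (le_centralizer D)).trans_le bot_le
  have hinf : D ⊓ M = ⊥ := by
    have := inf_normal_of_sup_eq_top hMD hcomm
    by_contra hne
    rw [inf_comm D, ← inf_eq_right.2 (inf_le_right : M ⊓ D ≤ D)] at hne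
    exact hDM ((hD.le_of_inf_ne_bot hne).trans inf_le_left)
  refine isUSubnormal_of_ssResidual_le le_sup_left (hmin.2 (H ⊔ D) fun hHD => ?_) le_sup_right
  have := sup_inf_assoc_of_coe_sup_eq_mul (mul_normal H D) hHM.le
  rw [hHD, top_inf_eq, hinf, sup_bot_eq] at this
  exact hHM.lt.ne' this

end Subnormal

section ChiefFactor

variable {G : Type*} [Group G] {A B : Subgroup G}

theorem isChiefFactor_iff_maximal [A.Normal] :
    IsChiefFactor A B ↔ Maximal (fun N : Subgroup G => N.Normal ∧ N < A) B := by
  constructor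
  · rintro ⟨-, hBA, _, -, hne, hmin⟩
    have hsurj := QuotientGroup.mk'_surjective B
    refine ⟨⟨inferInstance, hBA.lt_of_ne ?_⟩, fun N ⟨hN, hNA⟩ hBN => ?_⟩
    · rintro rfl
      exact hne (QuotientGroup.map_mk'_self B)
    · by_contra hNB
      have hmap : N.map (QuotientGroup.mk' B) = A.map (QuotientGroup.mk' B) := by
        refine hmin _ (hN.map _ hsurj) (map_mono hNA.le) ?_
        rwa [Ne, Subgroup.map_eq_bot_iff, QuotientGroup.ker_mk']
      have := congrArg (comap (QuotientGroup.mk' B)) hmap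
      rw [QuotientGroup.comap_map_mk', QuotientGroup.comap_map_mk', sup_eq_right.2 hBN,
        sup_eq_right.2 hBA] at this
      exact hNA.ne this
  · rintro ⟨⟨_, hBA⟩, hmax⟩
    have hsurj := QuotientGroup.mk'_surjective B
    refine ⟨inferInstance, hBA.le, inferInstance, Normal.map inferInstance _ hsurj, ?_, ?_⟩
    · rw [Ne, Subgroup.map_eq_bot_iff, QuotientGroup.ker_mk']
      exact hBA.not_ge
    · intro N hN hNA hne
      rw [← map_comap_eq_self_of_surjective hsurj N] at hne ⊢
      have hBN := QuotientGroup.le_comap_mk' B N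
      have hle : N.comap (QuotientGroup.mk' B) ≤ A := by
        refine (comap_mono hNA).trans ?_
        rw [QuotientGroup.comap_map_mk', sup_eq_right.2 hBA.le]
      by_contra hmap
      refine hne ?_
      rw [Subgroup.map_eq_bot_iff, QuotientGroup.ker_mk']
      exact hmax ⟨inferInstance, hle.lt_of_ne fun h => hmap (by rw [h])⟩ hBN

namespace IsChiefFactor

theorem eq_of_normal (h : IsChiefFactor A B) {R : Subgroup G} [R.Normal] (hBR : B ≤ R)
    (hRA : R < A) : R = B := by
  have := h.1
  exact (isChiefFactor_iff_maximal.1 h).eq_of_ge ⟨inferInstance, hRA⟩ hBR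

theorem lt (h : IsChiefFactor A B) : B < A := by
  have := h.1
  exact (isChiefFactor_iff_maximal.1 h).prop.2

theorem commutator_le [Group.IsSolvable G] (h : IsChiefFactor A B) : ⁅A, A⁆ ≤ B := by
  obtain ⟨-, -, _, hN⟩ := h
  have : Group.IsSolvable (G ⧸ B) := Group.isSolvable_of_surjective (QuotientGroup.mk'_surjective B)
  have := hN.isMulCommutative
  rw [← QuotientGroup.ker_mk' B, ← Subgroup.map_eq_bot_iff, map_commutator]
  exact commutator_eq_bot_iff_le_centralizer.2 (le_centralizer _)

theorem inf_eq_of_isCoatom [Group.IsSolvable G] (h : IsChiefFactor A B)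
    {M : Subgroup G} (hM : IsCoatom M) (hBM : B ≤ M) (hAM : ¬ A ≤ M) : M ⊓ A = B := by
  have := h.1
  have := inf_normal_of_sup_eq_top (sup_eq_top_of_isCoatom_of_not_le hM hAM)
    (h.commutator_le.trans hBM)
  exact h.eq_of_normal (le_inf hBM h.2.1) (inf_lt_right.2 hAM)

end IsChiefFactor

end ChiefFactor

section Supplement

variable {G : Type*} [Group G] {D E M : Subgroup G}

theorem le_frattini_of_forall_lt_sup_ne_top [E.Normal] (hM : IsCoatom M) (hEM : E ≤ M)
    (hED : E ≤ D) (hMD : M ⊔ D = ⊤) (hmin : ∀ L < M, L ⊔ D ≠ ⊤) : E ≤ frattini G := by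
  refine le_iInf₂ fun T (hT : IsCoatom T) => ?_
  by_contra hET
  have hMT : ¬ M ≤ T := fun hMT =>
    (hM.le_iff.1 hMT).elim hT.1 fun h => hET (h ▸ hEM)
  refine hmin (T ⊓ M) (inf_lt_right.2 hMT) ?_
  have := sup_inf_assoc_of_coe_sup_eq_mul (normal_mul E T) hEM
  rw [sup_comm, sup_eq_top_of_isCoatom_of_not_le hT hET, top_inf_eq] at this
  rw [← top_le_iff, ← hMD]
  exact sup_le (this.le.trans (sup_le (hED.trans le_sup_right) le_sup_left)) le_sup_right

theorem IsSupersoluble.isSupersolubleAbove_of_sup_eq_top [D.Normal] (hM : IsSupersoluble M)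
    (hMD : M ⊔ D = ⊤) : IsSupersolubleAbove D := by
  have hsurj : Function.Surjective ((QuotientGroup.mk' D).comp M.subtype) := by
    rw [← MonoidHom.range_eq_top, MonoidHom.range_comp, range_subtype, ← sup_bot_eq (M.map _),
      ← QuotientGroup.map_mk'_self D, ← Subgroup.map_sup, hMD,
      map_top_of_surjective _ (QuotientGroup.mk'_surjective D)]
  exact isSupersoluble_quotient_iff.1 (hM.of_surjective hsurj)

theorem IsMinimalNonsupersoluble.quotient (hG : IsMinimalNonsupersoluble G) [E.Normal]
    (hE : ¬ IsSupersolubleAbove E) : IsMinimalNonsupersoluble (G ⧸ E) :=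
  ⟨mt isSupersoluble_quotient_iff.1 hE, fun _ =>
    isSupersoluble_of_ne_top_of_surjective hG.2 (QuotientGroup.mk'_surjective E)⟩

end Supplement

section Forward

variable {G : Type*} [Group G] [Finite G] {D E M : Subgroup G} {p : ℕ}

theorem exists_isCoatom_le_not_le [D.Normal] [E.Normal] (hD : IsSupersolubleAbove D)
    (hE : ¬ IsSupersolubleAbove E) : ∃ M : Subgroup G, IsCoatom M ∧ E ≤ M ∧ ¬ D ≤ M := by
  by_contra! hcon
  refine hE (isSupersoluble_quotient_iff.1 (isSupersoluble_of_forall_isCoatom fun K hK => ?_))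
  have hsurj := QuotientGroup.mk'_surjective E
  have : (D.map (QuotientGroup.mk' E)).Normal := Normal.map inferInstance _ hsurj
  refine (hD.map hsurj).mono (normal_le_normalCore.2 (map_le_iff_le_comap.2 ?_))
  exact hcon _ (isCoatom_comap_of_surjective hsurj hK) (QuotientGroup.le_comap_mk' E K)

theorem IsMinimalNormal.isCyclic_of_sup_centralizer_eq_top {N A : Subgroup G}
    (hN : IsMinimalNormal N) (hA : IsSupersoluble A) (hNA : N ≤ A)
    (htop : A ⊔ centralizer (N : Set G) = ⊤) : IsCyclic N := by
  have := hN.1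
  have hne : N.subgroupOf A ≠ ⊥ := by
    rw [Ne, subgroupOf_eq_bot, disjoint_iff, inf_eq_left.2 hNA]
    exact hN.2.1
  obtain ⟨Q, hQ, hQprime, hQN⟩ := hA.exists_prime_card_normal_le hne
  have hQN' : Q.map A.subtype ≤ N := map_le_iff_le_comap.2 hQN
  have hQA : A ≤ normalizer (Q.map A.subtype : Set G) := by
    rwa [← normal_subgroupOf_iff_le_normalizer (map_subtype_le Q), subgroupOf,
      comap_map_eq_self_of_injective A.subtype_injective]
  have hnormal : (Q.map A.subtype).Normal := by
    rw [← normalizer_eq_top_iff, ← top_le_iff, ← htop]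
    exact sup_le hQA ((centralizer_le hQN').trans (centralizer_le_normalizer _))
  have hcard : Nat.card (Q.map A.subtype) = Nat.card Q :=
    card_map_of_injective A.subtype_injective
  have hQeq : Q.map A.subtype = N := by
    refine hN.2.2 _ hnormal hQN' fun hbot => hQprime.one_lt.ne' ?_
    rw [← hcard, hbot, card_bot]
  have := Fact.mk hQprime
  exact isCyclic_of_prime_card (hQeq ▸ hcard)

theorem subgroupOf_comap_centralizer_le_frattini [E.Normal] (hD : IsSupersolubleAbove D)
    (hG : IsMinimalNonsupersoluble G) (hE : ¬ IsSupersolubleAbove E)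
    (hN : IsMinimalNormal (D.map (QuotientGroup.mk' E))) (hMD : M ⊔ D = ⊤)
    (hmin : ∀ L < M, L ⊔ D ≠ ⊤) :
    ((centralizer (D.map (QuotientGroup.mk' E) : Set (G ⧸ E))).comap
      (QuotientGroup.mk' E)).subgroupOf M ≤ frattini M := by
  set π := QuotientGroup.mk' E
  set C := centralizer (D.map π : Set (G ⧸ E))
  refine le_iInf₂ fun L (hL : IsCoatom L) => ?_
  by_contra hCL
  have hLM : L.map M.subtype < M := by
    have := map_subtype_lt_map_subtype.2 hL.lt_top
    rwa [← MonoidHom.range_eq_map, range_subtype] at this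
  have hML : M ≤ L.map M.subtype ⊔ C.comap π := by
    have := congrArg (Subgroup.map M.subtype) (sup_eq_top_of_isCoatom_of_not_le hL hCL)
    rw [Subgroup.map_sup, subgroupOf_map_subtype, ← MonoidHom.range_eq_map, range_subtype] at this
    exact this.ge.trans (sup_le_sup_left inf_le_left _)
  have hNA : D.map π ≤ (L.map M.subtype ⊔ D).map π := map_mono le_sup_right
  have htop : (L.map M.subtype ⊔ D).map π ⊔ C = ⊤ := by
    rw [← top_le_iff, ← map_top_of_surjective π (QuotientGroup.mk'_surjective E), ← hMD,
      Subgroup.map_sup]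
    refine sup_le ((map_mono hML).trans ?_) (hNA.trans le_sup_left)
    rw [Subgroup.map_sup]
    exact sup_le_sup (map_mono le_sup_left) (map_comap_le π C)
  have hss := (hG.2 _ (hmin _ hLM)).of_surjective (π.subgroupMap_surjective _)
  have := hN.1
  have := hN.isCyclic_of_sup_centralizer_eq_top hss hNA htop
  have hDN := hD.map (QuotientGroup.mk'_surjective E)
  exact hE (isSupersoluble_quotient_iff.1 hDN.isSupersoluble_of_isCyclic)

theorem eq_bot_of_not_dvd_card (hM : IsCoatom M) (hMss : IsSupersoluble M)
    (hME : M ⊓ ssResidual G = E) (hE : E ≤ frattini G) (hp : p.Prime) (hpE : ¬ p ∣ Nat.card E)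
    (hindex : ∃ k, E.relIndex (ssResidual G) = p ^ k) (hlt : E < ssResidual G) : E = ⊥ := by
  have := Fact.mk hp
  let P : Sylow p (ssResidual G) := default
  have := normal_map_subtype_sylow_of_le_frattini hE hindex P
  set S := (P : Subgroup (ssResidual G)).map (ssResidual G).subtype
  have hSp : IsPGroup p S := P.2.map _
  obtain ⟨m, hm⟩ := IsPGroup.iff_card.1 hSp
  have hdisj : Disjoint E S := by
    refine disjoint_of_coprime_natCard ?_
    rw [hm]
    exact ((hp.coprime_iff_not_dvd.2 hpE).symm.pow_right m)
  have hSM : ¬ S ≤ M := by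
    intro hSM
    have hSE : S ≤ E := hME ▸ le_inf hSM (map_subtype_le _)
    obtain ⟨k, hk⟩ := hindex
    have hdvd : p ∣ Nat.card (ssResidual G) := by
      refine dvd_trans ?_ (relIndex_dvd_card E (ssResidual G))
      rw [hk]
      refine dvd_pow_self p fun hk0 => hlt.not_ge (relIndex_eq_one.1 ?_)
      rw [hk, hk0, pow_zero]
    refine P.ne_bot_of_dvd_card hdvd ?_
    exact (map_eq_bot_iff_of_injective _ (subtype_injective _)).1
      (le_bot_iff.1 (hdisj hSE le_rfl))
  have hS : ssResidual G ≤ S :=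
    ssResidual_le (hMss.isSupersolubleAbove_of_sup_eq_top (sup_eq_top_of_isCoatom_of_not_le hM hSM))
  exact hdisj.eq_bot_of_le (hlt.le.trans hS)

end Forward

section MinimalNonsupersoluble

variable {G : Type*} [Group G] [Finite G] {E M : Subgroup G} {p : ℕ}

theorem IsMinimalNonsupersoluble.not_dvd_card_of_isCoatom (hG : IsMinimalNonsupersoluble G)
    [E.Normal] (hE : ¬ IsSupersolubleAbove E)
    (hN : IsMinimalNormal ((ssResidual G).map (QuotientGroup.mk' E))) (hp : p.Prime)
    (hexp : ∀ x : (ssResidual G).map (QuotientGroup.mk' E), x ^ p = 1)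
    (hMD : M ⊔ ssResidual G = ⊤) (hmin : ∀ L < M, L ⊔ ssResidual G ≠ ⊤) :
    ¬ p ∣ Nat.card M := by
  have hsurj := QuotientGroup.mk'_surjective E
  set π := QuotientGroup.mk' E
  set N := (ssResidual G).map π
  have := hG.isSolvable
  have : Group.IsSolvable (G ⧸ E) := Group.isSolvable_of_surjective hsurj
  have := hN.1
  have := hN.isMulCommutative
  have hD : IsSupersolubleAbove (ssResidual G) := isSupersolubleAbove_ssResidual
  have hindex := hN.not_dvd_index_centralizer hp hexp (hD.map hsurj) (hG.quotient hE)
  have hF := subgroupOf_comap_centralizer_le_frattini hD hG hE hN hMD hmin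
  refine not_dvd_card_of_not_dvd_index_of_le_frattini hp hF fun hdvd => hindex ?_
  rw [← index_comap_of_surjective _ hsurj]
  exact hdvd.trans (relIndex_dvd_index_of_normal _ _)

theorem IsChiefFactor.eq_bot (h : IsChiefFactor (ssResidual G) E)
    (hG : IsMinimalNonsupersoluble G)
    (hmin : ∀ M : Subgroup G, IsCoatom M → ∀ L < M, L ⊔ ssResidual G ≠ ⊤) : E = ⊥ := by
  obtain ⟨-, hED, _, hN⟩ := id h
  have hE : ¬ IsSupersolubleAbove E := fun hE => h.lt.not_ge (ssResidual_le hE)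
  obtain ⟨M, hM, hEM, hDM⟩ := exists_isCoatom_le_not_le isSupersolubleAbove_ssResidual hE
  have hMD := sup_eq_top_of_isCoatom_of_not_le hM hDM
  have := hG.isSolvable
  have : Group.IsSolvable (G ⧸ E) :=
    Group.isSolvable_of_surjective (QuotientGroup.mk'_surjective E)
  have := hN.isMulCommutative
  obtain ⟨p, hp, hexp⟩ := hN.exists_prime_pow_eq_one
  have := Fact.mk hp
  have hindex : ∃ k, E.relIndex (ssResidual G) = p ^ k := by
    have hpN : IsPGroup p ((ssResidual G).map (QuotientGroup.mk' E)) :=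
      fun x => ⟨1, by rw [pow_one, hexp]⟩
    have := relIndex_ker (ssResidual G) (QuotientGroup.mk' E)
    rw [QuotientGroup.ker_mk'] at this
    exact this ▸ IsPGroup.iff_card.1 hpN
  have hpE : ¬ p ∣ Nat.card E := fun hdvd =>
    hG.not_dvd_card_of_isCoatom hE hN hp hexp hMD (hmin M hM) (hdvd.trans (card_dvd_of_le hEM))
  exact eq_bot_of_not_dvd_card hM (hG.2 M hM.1) (h.inf_eq_of_isCoatom hM hEM hDM)
    (le_frattini_of_forall_lt_sup_ne_top hM hEM hED hMD (hmin M hM)) hp hpE hindex h.lt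

theorem exists_isChiefFactor_ge {A R : Subgroup G} [A.Normal] [R.Normal] (hRA : R < A) :
    ∃ B, R ≤ B ∧ IsChiefFactor A B := by
  obtain ⟨B, hRB, hB⟩ := (Set.toFinite {N : Subgroup G | N.Normal ∧ N < A}).exists_le_maximal
    ⟨inferInstance, hRA⟩
  exact ⟨B, hRB, isChiefFactor_iff_maximal.2 hB⟩

theorem IsMinimalNonsupersoluble.isSDH (hG : IsMinimalNonsupersoluble G)
    (hmin : ∀ M : Subgroup G, IsCoatom M → ∀ L < M, L ⊔ ssResidual G ≠ ⊤) : IsSDH G := by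
  refine ⟨hG, inferInstance, fun hD => hG.1 ?_, fun R _ hRD hR => ?_⟩
  · have := isSupersolubleAbove_ssResidual (G := G)
    rw [hD] at this
    exact isSupersoluble_iff.2 this
  · by_contra hne
    obtain ⟨E, hRE, hE⟩ := exists_isChiefFactor_ge (hRD.lt_of_ne hne)
    exact hR (le_bot_iff.1 (hRE.trans_eq (hE.eq_bot hG hmin)))

theorem isSupersoluble_of_forall_covBy_isUSubnormal
    (h : ∀ H, H ⋖ M → IsUSubnormal H) : IsSupersoluble M := by
  refine isSupersoluble_of_forall_isCoatom fun K hK => ?_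
  have hKM : (K.map M.subtype).subgroupOf M = K :=
    comap_map_eq_self_of_injective (subtype_injective M) K
  have hcov : K.map M.subtype ⋖ M := by
    rwa [← isCoatom_subgroupOf_iff_covBy (map_subtype_le K), hKM]
  exact hKM ▸ (h _ hcov).isSupersolubleAbove_normalCore_of_covBy hcov

theorem isSupersoluble_of_ne_top_of_forall_isCoatom
    (h : ∀ M : Subgroup G, IsCoatom M → IsSupersoluble M) {H : Subgroup G} (hH : H ≠ ⊤) :
    IsSupersoluble H := by
  obtain ⟨M, hM, hHM⟩ := (eq_top_or_exists_le_coatom H).resolve_left hH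
  exact (h M hM).of_injective (inclusion_injective hHM)

theorem isSDH_of_forall_isUSubnormal (hG : ¬ IsSupersoluble G)
    (h : ∀ M : Subgroup G, IsCoatom M → ∀ H, H ⋖ M → IsUSubnormal H) : IsSDH G := by
  have hss : IsMinimalNonsupersoluble G :=
    ⟨hG, fun _ => isSupersoluble_of_ne_top_of_forall_isCoatom fun M hM =>
      isSupersoluble_of_forall_covBy_isUSubnormal (h M hM)⟩
  refine hss.isSDH fun M hM L hLM => ?_
  obtain ⟨H, hLH, hHM⟩ := exists_le_covBy_of_lt hLM
  have := (h M hM H hHM).sup_ssResidual_ne_top (hHM.lt.trans_le le_top).ne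
  exact ne_top_of_le_ne_top this (sup_le_sup_right hLH _)

end MinimalNonsupersoluble

/-- Every `2`-maximal subgroup of `G` is `𝔘`-subnormal in `G` if and only if
`G` is either supersoluble or an `SDH`-group. -/
theorem every_2maximal_Usubnormal_iff (G : Type*) [Group G] [Finite G] :
    (∀ H : Subgroup G, IsNMaximal 2 H → IsUSubnormal H) ↔
      IsSupersoluble G ∨ IsSDH G := by
  constructor
  · intro h
    refine or_iff_not_imp_left.2 fun hG => isSDH_of_forall_isUSubnormal hG fun M hM H hHM => ?_
    exact h H (isNMaximal_two_iff.2 ⟨M, hM, hHM⟩)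
  · rintro (hG | hG) H hH
    · exact hG.isUSubnormal H
    · obtain ⟨M, hM, hHM⟩ := isNMaximal_two_iff.1 hH
      exact hG.isUSubnormal hM hHM
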